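/- arXiv:2105.00018 — 3 statements merged into one kernel-verified Lean document; each statement's English description precedes it below -/
import Mathlib

section
/- There exist C > 0 and k₀ > 0 such that for every k ≥ k₀ and every G ∈ L¹(ℝ; ℝ), the series ∑_{n=0}^∞ ‖T₀ⁿ G‖₁ is bounded above by k² (log k)^C ‖G‖₁. -/
open MeasureTheory ProbabilityTheory Real Filter Set
open scoped ENNReal

noncomputable def hkfun (k x : ℝ) : ℝ :=
  Real.log ((Real.exp (-k) + Real.exp x) / (1 + Real.exp (x - k)))

noncomputable def T0 (ζ : ℝ → ℝ) (k : ℝ) (G : ℝ → ℝ) : ℝ → ℝ :=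
  fun x => ∫ y, G y * deriv (hkfun k) y * ζ (x - hkfun k y)

/-!
The proof is a Foster–Lyapunov argument. Under `T0` a particle at `y` survives with probability
`hkfun k` differentiated at `y`, then jumps to `hkfun k y` plus an independent noise of variance
`σ²`. The function `V x = 9 * k ^ 2 - min (x ^ 2) (4 * k ^ 2)` decreases by at least `σ² / 2` in
expectation at every step once `k` is large:

* if `|y| ≤ k`, the noise lowers the parabola by about `σ²`, while the drift `y - hkfun k y` towards
  the origin is bounded by twice the killing probability, so the gain it brings is outweighed by the
  mass lost, as `V` is of order `k ^ 2`;
* if `|y| ≥ k`, at least half of the mass is killed, and `max V < 2 * min V`.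

Summing the drift inequality along the iterates bounds `(σ² / 2) * ∑ ‖T0ⁿ G‖₁` by `9 k² ‖G‖₁`.
-/

section ExponentialTails

variable {α E : Type*} [MeasurableSpace α] [NormedAddCommGroup E] {μ : Measure α}

lemma lintegral_Ioi_exp_tail_mul_rpow_lt_top {δ : ℝ} (hδ : 0 < δ) (C : ℝ) {p : ℝ} (hp : 0 < p) :
    ∫⁻ t in Ioi 0, ENNReal.ofReal (C * exp (-δ * t)) * ENNReal.ofReal (t ^ (p - 1)) < ∞ := by
  have hint : IntegrableOn (fun t : ℝ => C * (t ^ (p - 1) * exp (-δ * t ^ (1 : ℝ)))) (Ioi 0) :=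
    (integrableOn_rpow_mul_exp_neg_mul_rpow (by linarith) one_pos hδ).const_mul C
  refine lt_of_eq_of_lt (setLIntegral_congr_fun measurableSet_Ioi fun t ht => ?_)
    hint.lintegral_lt_top
  rw [← ENNReal.ofReal_mul' (rpow_nonneg (le_of_lt ht) _), rpow_one]
  ring_nf

lemma integrable_norm_rpow_of_exp_tail {f : α → E} (hf : AEStronglyMeasurable f μ) {δ C : ℝ}
    (hδ : 0 < δ) (htail : ∀ t > 0, μ {a | t < ‖f a‖} ≤ ENNReal.ofReal (C * exp (-δ * t)))
    {p : ℝ} (hp : 0 < p) : Integrable (fun a => ‖f a‖ ^ p) μ := by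
  have hnn : ∀ a, 0 ≤ ‖f a‖ ^ p := fun a => rpow_nonneg (norm_nonneg _) _
  refine ⟨(hf.norm.aemeasurable.pow_const p).aestronglyMeasurable, ?_⟩
  rw [hasFiniteIntegral_iff_ofReal (ae_of_all _ hnn),
    lintegral_rpow_eq_lintegral_meas_lt_mul μ (ae_of_all _ fun a => norm_nonneg _)
      hf.norm.aemeasurable hp]
  refine ENNReal.mul_lt_top ENNReal.ofReal_lt_top <|
    (setLIntegral_mono' measurableSet_Ioi fun t ht => ?_).trans_lt
      (lintegral_Ioi_exp_tail_mul_rpow_lt_top hδ C hp)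
  gcongr
  exact htail t ht

lemma tendsto_setIntegral_lt_norm_atTop {F : Type*} [NormedAddCommGroup F] [NormedSpace ℝ F]
    [MeasurableSpace E] [OpensMeasurableSpace E] {ν : Measure E} {f : E → F}
    (hf : Integrable f ν) :
    Tendsto (fun r : ℝ => ∫ x in {x | r < ‖x‖}, f x ∂ν) atTop (nhds 0) := by
  have hInter : ⋂ r : ℝ, {x : E | r < ‖x‖} = ∅ :=
    eq_empty_of_forall_notMem fun x hx => lt_irrefl ‖x‖ (mem_iInter.1 hx ‖x‖)
  have hanti : Antitone fun r : ℝ => {x : E | r < ‖x‖} := fun _ _ hr _ hx => hr.trans_lt hx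
  simpa only [hInter, setIntegral_empty] using tendsto_setIntegral_of_antitone
    (fun r => measurableSet_lt measurable_const measurable_norm) hanti ⟨0, hf.integrableOn⟩

lemma integral_sq_pos {ν : Measure ℝ} [NeZero ν] [NullSingletonClass ν]
    (h2 : Integrable (fun x => x ^ 2) ν) : 0 < ∫ x, x ^ 2 ∂ν := by
  refine (integral_pos_iff_support_of_nonneg (fun x => sq_nonneg x) h2).2 ?_
  have hsupport : Function.support (fun x : ℝ => x ^ 2) =ᵐ[ν] univ :=
    eventuallyEq_univ.2 <| (Measure.ae_ne ν (0 : ℝ)).mono fun _ hx => pow_ne_zero 2 hx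
  rw [measure_congr hsupport]
  exact Measure.measure_univ_pos.2 (NeZero.ne ν)

end ExponentialTails

section Density

variable {α : Type*} [MeasurableSpace α] {μ : Measure α} {ρ : α → ℝ}

lemma integral_withDensity_ofReal (hρ : Measurable ρ) (hρ0 : ∀ x, 0 ≤ ρ x) (g : α → ℝ) :
    ∫ x, g x ∂μ.withDensity (fun x => ENNReal.ofReal (ρ x)) = ∫ x, g x * ρ x ∂μ := by
  rw [integral_withDensity_eq_integral_toReal_smul hρ.ennreal_ofReal (by simp)]
  simp only [ENNReal.toReal_ofReal (hρ0 _), smul_eq_mul, mul_comm]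

lemma integrable_withDensity_ofReal_iff (hρ : Measurable ρ) (hρ0 : ∀ x, 0 ≤ ρ x) {g : α → ℝ} :
    Integrable g (μ.withDensity fun x => ENNReal.ofReal (ρ x)) ↔
      Integrable (fun x => g x * ρ x) μ := by
  rw [integrable_withDensity_iff hρ.ennreal_ofReal (by simp)]
  simp only [ENNReal.toReal_ofReal (hρ0 _)]

lemma isProbabilityMeasure_withDensity_ofReal (hρ0 : ∀ x, 0 ≤ ρ x) (hρ1 : ∫ x, ρ x ∂μ = 1) :
    IsProbabilityMeasure (μ.withDensity fun x => ENNReal.ofReal (ρ x)) := by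
  constructor
  rw [withDensity_apply _ MeasurableSet.univ, setLIntegral_univ,
    ← ofReal_integral_eq_lintegral_ofReal (.of_integral_ne_zero (by simp [hρ1])) (ae_of_all _ hρ0),
    hρ1, ENNReal.ofReal_one]

lemma lintegral_comp_sub_right_mul {A : Type*} [AddGroup A] [MeasurableSpace A]
    [MeasurableAdd A] {μ : Measure A} [μ.IsAddRightInvariant] {f g : A → ℝ≥0∞}
    (hf : Measurable f) (hg : Measurable g) (a : A) :
    ∫⁻ x, f (x - a) * g x ∂μ = ∫⁻ x, g (x + a) ∂μ.withDensity f := by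
  rw [lintegral_withDensity_eq_lintegral_mul μ hf (by fun_prop),
    ← lintegral_sub_right_eq_self (fun x => (f * fun y => g (y + a)) x) a]
  simp only [Pi.mul_apply, sub_add_cancel]

end Density

section IntegralOperator

variable {α E : Type*} [MeasurableSpace α] {μ : Measure α} [SFinite μ] [NormedAddCommGroup E]
  [NormedSpace ℝ E] {K : α → α → ℝ} {V : α → ℝ≥0∞} {c : ℝ≥0∞} {G : α → E}

/-- The integral operator with kernel `K` with respect to the measure `μ`, acting on vector-valued
functions. -/
noncomputable def integralOperator (μ : Measure α) (K : α → α → ℝ) (G : α → E) : α → E :=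
  fun x => ∫ y, K x y • G y ∂μ

lemma aestronglyMeasurable_integralOperator (hK : Measurable (Function.uncurry K))
    (hG : AEStronglyMeasurable G μ) : AEStronglyMeasurable (integralOperator μ K G) μ :=
  (hK.aestronglyMeasurable.smul hG.comp_snd).integral_prod_right'

lemma aestronglyMeasurable_iterate_integralOperator (hK : Measurable (Function.uncurry K))
    (hG : AEStronglyMeasurable G μ) (n : ℕ) :
    AEStronglyMeasurable ((integralOperator μ K)^[n] G) μ := by
  induction n with
  | zero => exact hG
  | succ n ih =>
    rw [Function.iterate_succ_apply']
    exact aestronglyMeasurable_integralOperator hK ih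

lemma lintegral_enorm_integralOperator_mul_le (hK : Measurable (Function.uncurry K))
    (hV : Measurable V) (hG : AEStronglyMeasurable G μ) :
    ∫⁻ x, ‖integralOperator μ K G x‖ₑ * V x ∂μ ≤
      ∫⁻ y, ‖G y‖ₑ * ∫⁻ x, ‖K x y‖ₑ * V x ∂μ ∂μ := by
  have hmeas : AEMeasurable (Function.uncurry fun x y => ‖G y‖ₑ * (‖K x y‖ₑ * V x)) (μ.prod μ) :=
    hG.enorm.comp_snd.mul (hK.enorm.mul (hV.comp measurable_fst)).aemeasurable
  calc ∫⁻ x, ‖integralOperator μ K G x‖ₑ * V x ∂μ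
    _ ≤ ∫⁻ x, (∫⁻ y, ‖K x y • G y‖ₑ ∂μ) * V x ∂μ := by
        gcongr
        exact enorm_integral_le_lintegral_enorm _
    _ ≤ ∫⁻ x, ∫⁻ y, ‖K x y • G y‖ₑ * V x ∂μ ∂μ := by
        gcongr
        exact lintegral_mul_const_le _ _
    _ = ∫⁻ x, ∫⁻ y, ‖G y‖ₑ * (‖K x y‖ₑ * V x) ∂μ ∂μ := by
        simp only [enorm_smul, mul_left_comm, mul_assoc]
    _ = ∫⁻ y, ∫⁻ x, ‖G y‖ₑ * (‖K x y‖ₑ * V x) ∂μ ∂μ := lintegral_lintegral_swap hmeas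
    _ = ∫⁻ y, ‖G y‖ₑ * ∫⁻ x, ‖K x y‖ₑ * V x ∂μ ∂μ := by
        simp only [lintegral_const_mul' _ _ enorm_ne_top]

lemma mul_lintegral_enorm_add_lintegral_integralOperator_le (hK : Measurable (Function.uncurry K))
    (hV : Measurable V) (hdrift : ∀ᵐ y ∂μ, c + ∫⁻ x, ‖K x y‖ₑ * V x ∂μ ≤ V y)
    (hG : AEStronglyMeasurable G μ) :
    c * ∫⁻ x, ‖G x‖ₑ ∂μ + ∫⁻ x, ‖integralOperator μ K G x‖ₑ * V x ∂μ ≤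
      ∫⁻ x, ‖G x‖ₑ * V x ∂μ := by
  calc c * ∫⁻ x, ‖G x‖ₑ ∂μ + ∫⁻ x, ‖integralOperator μ K G x‖ₑ * V x ∂μ
    _ ≤ ∫⁻ y, ‖G y‖ₑ * c ∂μ + ∫⁻ y, ‖G y‖ₑ * ∫⁻ x, ‖K x y‖ₑ * V x ∂μ ∂μ := by
        rw [lintegral_mul_const'' _ hG.enorm, mul_comm c]
        exact add_le_add_right (lintegral_enorm_integralOperator_mul_le hK hV hG) _
    _ = ∫⁻ y, ‖G y‖ₑ * (c + ∫⁻ x, ‖K x y‖ₑ * V x ∂μ) ∂μ := by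
        rw [← lintegral_add_left' (hG.enorm.mul_const c)]
        simp only [mul_add]
    _ ≤ ∫⁻ y, ‖G y‖ₑ * V y ∂μ := by
        refine lintegral_mono_ae (hdrift.mono fun y hy => ?_)
        gcongr

theorem mul_tsum_lintegral_enorm_iterate_integralOperator_le (hK : Measurable (Function.uncurry K))
    (hV : Measurable V) (hdrift : ∀ᵐ y ∂μ, c + ∫⁻ x, ‖K x y‖ₑ * V x ∂μ ≤ V y)
    (hG : AEStronglyMeasurable G μ) :
    c * ∑' n, ∫⁻ x, ‖(integralOperator μ K)^[n] G x‖ₑ ∂μ ≤ ∫⁻ x, ‖G x‖ₑ * V x ∂μ := by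
  set T : (α → E) → α → E := integralOperator μ K
  have hpartial : ∀ N : ℕ, ∑ n ∈ Finset.range N, c * ∫⁻ x, ‖T^[n] G x‖ₑ ∂μ +
      ∫⁻ x, ‖T^[N] G x‖ₑ * V x ∂μ ≤ ∫⁻ x, ‖G x‖ₑ * V x ∂μ := by
    intro N
    induction N with
    | zero => simp
    | succ N ih =>
      rw [Finset.sum_range_succ, add_assoc, Function.iterate_succ_apply']
      refine le_trans ?_ ih
      gcongr
      exact mul_lintegral_enorm_add_lintegral_integralOperator_le hK hV hdrift
        (aestronglyMeasurable_iterate_integralOperator hK hG N)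
  rw [← ENNReal.tsum_mul_left]
  exact ENNReal.tsum_le_of_sum_range_le fun N => le_self_add.trans (hpartial N)

end IntegralOperator

section Saturation

lemma hasDerivAt_log_one_add_exp (z : ℝ) :
    HasDerivAt (fun z => log (1 + exp z)) (sigmoid z) z := by
  refine (((hasDerivAt_exp z).const_add 1).log (by positivity)).congr_deriv ?_
  rw [sigmoid_def, exp_neg]
  field_simp
  ring

lemma log_one_add_exp_eq_add (z : ℝ) : log (1 + exp z) = z + log (1 + exp (-z)) := by
  have hfactor : 1 + exp z = exp z * (1 + exp (-z)) := by
    rw [mul_add, ← exp_add, add_neg_cancel, exp_zero, mul_one, add_comm]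
  rw [hfactor, log_mul (by positivity) (by positivity), log_exp]

lemma log_one_add_exp_nonneg (z : ℝ) : 0 ≤ log (1 + exp z) :=
  log_nonneg (by linarith [exp_pos z])

lemma log_one_add_exp_le_two_mul_sigmoid {z : ℝ} (hz : z ≤ 0) :
    log (1 + exp z) ≤ 2 * sigmoid z := by
  calc log (1 + exp z)
    _ ≤ exp z := by linarith [log_le_sub_one_of_pos (show 0 < 1 + exp z by positivity)]
    _ = (1 + exp z) * sigmoid z := by
        rw [sigmoid_def, exp_neg]
        field_simp
        ring
    _ ≤ 2 * sigmoid z :=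
        mul_le_mul_of_nonneg_right (by linarith [exp_le_one_iff.2 hz]) (sigmoid_nonneg z)

variable {k y : ℝ}

lemma hkfun_eq (k y : ℝ) :
    hkfun k y = log (1 + exp (y + k)) - log (1 + exp (y - k)) - k := by
  have hfactor : exp (-k) + exp y = exp (-k) * (1 + exp (y + k)) := by
    rw [mul_add, ← exp_add]
    ring_nf
  rw [hkfun, log_div (by positivity) (by positivity), hfactor,
    log_mul (by positivity) (by positivity), log_exp]
  ring

lemma measurable_hkfun (k : ℝ) : Measurable (hkfun k) := by
  unfold hkfun
  fun_prop

lemma deriv_hkfun (k y : ℝ) : deriv (hkfun k) y = sigmoid (y + k) - sigmoid (y - k) := by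
  rw [funext (hkfun_eq k)]
  exact ((((hasDerivAt_log_one_add_exp _).comp_add_const y k).sub
    ((hasDerivAt_log_one_add_exp _).comp_sub_const y k)).sub_const k).deriv

lemma abs_hkfun_le (hk : 0 ≤ k) : |hkfun k y| ≤ k := by
  have hmono : ∀ {a b : ℝ}, a ≤ b → log (1 + exp a) ≤ log (1 + exp b) := fun hab => by gcongr
  rw [abs_le, hkfun_eq]
  constructor
  · linarith [hmono (show y - k ≤ y + k by linarith)]
  · linarith [hmono (show -(y + k) ≤ -(y - k) by linarith), log_one_add_exp_eq_add (y + k),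
      log_one_add_exp_eq_add (y - k)]

lemma deriv_hkfun_nonneg (hk : 0 ≤ k) : 0 ≤ deriv (hkfun k) y := by
  rw [deriv_hkfun, sub_nonneg]
  exact sigmoid_le (by linarith)

lemma deriv_hkfun_le_half (hy : k ≤ |y|) : deriv (hkfun k) y ≤ 1 / 2 := by
  rw [deriv_hkfun]
  rcases le_abs.1 hy with hy | hy
  · linarith [sigmoid_le_one (y + k), sigmoid_le (show 0 ≤ y - k by linarith), sigmoid_zero]
  · linarith [sigmoid_nonneg (y - k), sigmoid_le (show y + k ≤ 0 by linarith), sigmoid_zero]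

lemma abs_sub_hkfun_le (hy : |y| ≤ k) : |y - hkfun k y| ≤ 2 * (1 - deriv (hkfun k) y) := by
  obtain ⟨hy₁, hy₂⟩ := abs_le.1 hy
  rw [deriv_hkfun, hkfun_eq, log_one_add_exp_eq_add (y + k), abs_le]
  have hleft := log_one_add_exp_le_two_mul_sigmoid (show -(y + k) ≤ 0 by linarith)
  have hright := log_one_add_exp_le_two_mul_sigmoid (show y - k ≤ 0 by linarith)
  constructor <;>
    linarith [sigmoid_neg (y + k), log_one_add_exp_nonneg (-(y + k)),
      log_one_add_exp_nonneg (y - k)]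

end Saturation

section Drift

variable {k h d s y x : ℝ} {ν : Measure ℝ}

/-- The Lyapunov function of the drift argument: a downward parabola, frozen outside `[-2k, 2k]`.
The height `9 * k ^ 2` makes its maximum less than twice its minimum `5 * k ^ 2`. -/
noncomputable def truncatedParabola (k x : ℝ) : ℝ :=
  9 * k ^ 2 - min (x ^ 2) (4 * k ^ 2)

lemma measurable_truncatedParabola (k : ℝ) : Measurable (truncatedParabola k) := by
  unfold truncatedParabola
  fun_prop

lemma truncatedParabola_le (k x : ℝ) : truncatedParabola k x ≤ 9 * k ^ 2 :=
  sub_le_self _ (by positivity)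

lemma le_truncatedParabola (k x : ℝ) : 5 * k ^ 2 ≤ truncatedParabola k x := by
  unfold truncatedParabola
  linarith [min_le_right (x ^ 2) (4 * k ^ 2)]

lemma truncatedParabola_nonneg (k x : ℝ) : 0 ≤ truncatedParabola k x :=
  le_trans (by positivity) (le_truncatedParabola k x)

lemma truncatedParabola_of_abs_le (hx : |x| ≤ 2 * k) :
    truncatedParabola k x = 9 * k ^ 2 - x ^ 2 := by
  rw [truncatedParabola, min_eq_left]
  calc x ^ 2 = |x| ^ 2 := (sq_abs x).symm
    _ ≤ (2 * k) ^ 2 := by gcongr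
    _ = 4 * k ^ 2 := by ring

lemma truncatedParabola_add_le (hh : |h| ≤ k) (x : ℝ) :
    truncatedParabola k (x + h) ≤
      9 * k ^ 2 - (x + h) ^ 2 + 4 * {x | k < ‖x‖}.indicator (fun x => x ^ 2) x := by
  have htriangle : |x + h| ≤ |x| + k := (abs_add_le x h).trans (by gcongr)
  by_cases hx : k < ‖x‖
  · have hsq : (x + h) ^ 2 ≤ (2 * x) ^ 2 := by
      rw [norm_eq_abs] at hx
      rw [sq_le_sq, abs_mul, abs_two]
      linarith
    rw [indicator_of_mem (by exact hx)]
    linarith [truncatedParabola_le k (x + h)]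
  · rw [indicator_of_notMem (by exact hx), mul_zero, add_zero]
    rw [not_lt, norm_eq_abs] at hx
    exact (truncatedParabola_of_abs_le (by linarith)).le

lemma integrable_truncatedParabola_add [IsFiniteMeasure ν] (k h : ℝ) :
    Integrable (fun x => truncatedParabola k (x + h)) ν := by
  refine .of_bound ((measurable_truncatedParabola k).comp
    (measurable_add_const h)).aestronglyMeasurable (9 * k ^ 2) (ae_of_all _ fun x => ?_)
  rw [norm_of_nonneg (truncatedParabola_nonneg _ _)]
  exact truncatedParabola_le _ _

lemma integral_truncatedParabola_add_le [IsProbabilityMeasure ν] (hmean : ∫ x, x ∂ν = 0)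
    (h2 : Integrable (fun x => x ^ 2) ν) (hh : |h| ≤ k) :
    ∫ x, truncatedParabola k (x + h) ∂ν ≤
      9 * k ^ 2 - h ^ 2 - ∫ x, x ^ 2 ∂ν + 4 * ∫ x in {x | k < ‖x‖}, x ^ 2 ∂ν := by
  have h1 : Integrable (fun x => x) ν :=
    ((memLp_two_iff_integrable_sq (by fun_prop)).2 h2).integrable one_le_two
  have hms : MeasurableSet {x : ℝ | k < ‖x‖} := measurableSet_lt measurable_const measurable_norm
  have hlin : Integrable (fun x => 9 * k ^ 2 - h ^ 2 - 2 * h * x) ν :=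
    (integrable_const _).sub (h1.const_mul _)
  have hquad : Integrable (fun x => 9 * k ^ 2 - h ^ 2 - 2 * h * x - x ^ 2) ν := hlin.sub h2
  have htail : Integrable (fun x => 4 * {x | k < ‖x‖}.indicator (fun x => x ^ 2) x) ν :=
    (h2.indicator hms).const_mul 4
  calc ∫ x, truncatedParabola k (x + h) ∂ν
    _ ≤ ∫ x, (9 * k ^ 2 - h ^ 2 - 2 * h * x - x ^ 2
          + 4 * {x | k < ‖x‖}.indicator (fun x => x ^ 2) x) ∂ν := by
        refine integral_mono (integrable_truncatedParabola_add k h) (hquad.add htail)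
          fun x => (truncatedParabola_add_le hh x).trans_eq (by ring)
    _ = 9 * k ^ 2 - h ^ 2 - ∫ x, x ^ 2 ∂ν + 4 * ∫ x in {x | k < ‖x‖}, x ^ 2 ∂ν := by
        rw [integral_add hquad htail, integral_sub hlin h2,
          integral_sub (integrable_const _) (h1.const_mul _), integral_const_mul,
          integral_const_mul, hmean, integral_indicator hms, integral_const, probReal_univ]
        simp

lemma mul_sub_sq_add_le (hk : 1 ≤ k) (hs : s ≤ k ^ 2) (hy : |y| ≤ k) (hh : |h| ≤ k)
    (hd : |y - h| ≤ 2 * (1 - d)) :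
    d * (9 * k ^ 2 - h ^ 2 - s / 2) + s / 2 ≤ 9 * k ^ 2 - y ^ 2 := by
  have hd1 : 0 ≤ 1 - d := by linarith [abs_nonneg (y - h)]
  have hh2 : h ^ 2 ≤ k ^ 2 := sq_le_sq' (abs_le.1 hh).1 (abs_le.1 hh).2
  have hshift : y ^ 2 - h ^ 2 ≤ (1 - d) * (4 * k) := by
    calc y ^ 2 - h ^ 2 = (y - h) * (y + h) := by ring
      _ ≤ |y - h| * |y + h| := (le_abs_self _).trans_eq (abs_mul _ _)
      _ ≤ (2 * (1 - d)) * (k + k) := by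
          gcongr
          exact (abs_add_le y h).trans (add_le_add hy hh)
      _ = (1 - d) * (4 * k) := by ring
  have hgap : (1 - d) * (4 * k) ≤ (1 - d) * (9 * k ^ 2 - h ^ 2 - s / 2) := by
    gcongr
    nlinarith
  linarith

lemma deriv_mul_integral_truncatedParabola_add_le [IsProbabilityMeasure ν]
    (hmean : ∫ x, x ∂ν = 0) (h2 : Integrable (fun x => x ^ 2) ν) (hk : 1 ≤ k)
    (hvar : ∫ x, x ^ 2 ∂ν ≤ k ^ 2)
    (htail : ∫ x in {x | k < ‖x‖}, x ^ 2 ∂ν ≤ (∫ x, x ^ 2 ∂ν) / 8) (y : ℝ) :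
    deriv (hkfun k) y * ∫ x, truncatedParabola k (x + hkfun k y) ∂ν + (∫ x, x ^ 2 ∂ν) / 2 ≤
      truncatedParabola k y := by
  have hk0 : 0 ≤ k := by linarith
  have hh : |hkfun k y| ≤ k := abs_hkfun_le hk0
  have hd0 : 0 ≤ deriv (hkfun k) y := deriv_hkfun_nonneg hk0
  rcases le_total |y| k with hy | hy
  · calc _ ≤ deriv (hkfun k) y * (9 * k ^ 2 - hkfun k y ^ 2 - (∫ x, x ^ 2 ∂ν) / 2)
            + (∫ x, x ^ 2 ∂ν) / 2 := by
          gcongr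
          linarith [integral_truncatedParabola_add_le hmean h2 hh]
      _ ≤ 9 * k ^ 2 - y ^ 2 := mul_sub_sq_add_le hk hvar hy hh (abs_sub_hkfun_le hy)
      _ = truncatedParabola k y := (truncatedParabola_of_abs_le (by linarith)).symm
  · have hmax : ∫ x, truncatedParabola k (x + hkfun k y) ∂ν ≤ 9 * k ^ 2 :=
      (integral_mono (integrable_truncatedParabola_add _ _) (integrable_const _)
        fun x => truncatedParabola_le _ _).trans_eq (by simp)
    calc _ ≤ 1 / 2 * (9 * k ^ 2) + k ^ 2 / 2 := by
          gcongr
          · exact integral_nonneg fun x => truncatedParabola_nonneg _ _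
          · exact deriv_hkfun_le_half hy
      _ = 5 * k ^ 2 := by ring
      _ ≤ truncatedParabola k y := le_truncatedParabola k y

lemma eventually_deriv_mul_integral_truncatedParabola_add_le [IsProbabilityMeasure ν]
    (hmean : ∫ x, x ∂ν = 0) (h2 : Integrable (fun x => x ^ 2) ν) (hpos : 0 < ∫ x, x ^ 2 ∂ν) :
    ∀ᶠ k in atTop, ∀ y, deriv (hkfun k) y * ∫ x, truncatedParabola k (x + hkfun k y) ∂ν
      + (∫ x, x ^ 2 ∂ν) / 2 ≤ truncatedParabola k y := by
  filter_upwards [eventually_ge_atTop 1,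
    (tendsto_pow_atTop two_ne_zero).eventually_ge_atTop (∫ x, x ^ 2 ∂ν),
    (tendsto_setIntegral_lt_norm_atTop h2).eventually_le_const
      (show 0 < (∫ x, x ^ 2 ∂ν) / 8 by positivity)] with k hk hvar htail
  exact deriv_mul_integral_truncatedParabola_add_le hmean h2 hk hvar htail

end Drift

section LogisticStep

variable {ζ : ℝ → ℝ} {k : ℝ}

lemma T0_eq_integralOperator (ζ : ℝ → ℝ) (k : ℝ) :
    T0 ζ k = integralOperator volume fun x y => deriv (hkfun k) y * ζ (x - hkfun k y) := by
  ext G x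
  simp only [T0, integralOperator, smul_eq_mul, mul_comm, mul_assoc]

lemma measurable_uncurry_deriv_hkfun_mul (hζ : Measurable ζ) (k : ℝ) :
    Measurable (Function.uncurry fun x y => deriv (hkfun k) y * ζ (x - hkfun k y)) :=
  ((measurable_deriv (hkfun k)).comp measurable_snd).mul
    (hζ.comp (measurable_fst.sub ((measurable_hkfun k).comp measurable_snd)))

lemma ofReal_add_lintegral_deriv_hkfun_mul_le (hζ : Measurable ζ) (hζ0 : ∀ x, 0 ≤ ζ x)
    (hk : 0 ≤ k) {V : ℝ → ℝ} (hV : Measurable V) (hV0 : ∀ x, 0 ≤ V x) {s y : ℝ} (hs : 0 ≤ s)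
    (hint : Integrable (fun x => V (x + hkfun k y))
      (volume.withDensity fun x => ENNReal.ofReal (ζ x)))
    (hdrift : deriv (hkfun k) y * ∫ x, V (x + hkfun k y)
      ∂volume.withDensity (fun x => ENNReal.ofReal (ζ x)) + s ≤ V y) :
    ENNReal.ofReal s + ∫⁻ x, ‖deriv (hkfun k) y * ζ (x - hkfun k y)‖ₑ * ENNReal.ofReal (V x) ≤
      ENNReal.ofReal (V y) := by
  have hd : 0 ≤ deriv (hkfun k) y := deriv_hkfun_nonneg hk
  have hkernel : ∫⁻ x, ‖deriv (hkfun k) y * ζ (x - hkfun k y)‖ₑ * ENNReal.ofReal (V x) =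
      ENNReal.ofReal (deriv (hkfun k) y * ∫ x, V (x + hkfun k y)
        ∂volume.withDensity (fun x => ENNReal.ofReal (ζ x))) := by
    simp only [enorm_mul, enorm_of_nonneg hd, enorm_of_nonneg (hζ0 _), mul_assoc]
    rw [lintegral_const_mul' _ _ ENNReal.ofReal_ne_top,
      lintegral_comp_sub_right_mul hζ.ennreal_ofReal hV.ennreal_ofReal, ENNReal.ofReal_mul hd,
      ofReal_integral_eq_lintegral_ofReal hint (ae_of_all _ fun x => hV0 _)]
  rw [hkernel, add_comm, ← ENNReal.ofReal_add (mul_nonneg hd (integral_nonneg fun x => hV0 _)) hs]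
  exact ENNReal.ofReal_le_ofReal hdrift

lemma tsum_lintegral_enorm_iterate_T0_le (hζ : Measurable ζ) (hζ0 : ∀ x, 0 ≤ ζ x)
    [IsProbabilityMeasure (volume.withDensity fun x => ENNReal.ofReal (ζ x))]
    (hk : 0 ≤ k) {s : ℝ} (hs : 0 < s)
    (hdrift : ∀ y, deriv (hkfun k) y * ∫ x, truncatedParabola k (x + hkfun k y)
      ∂volume.withDensity (fun x => ENNReal.ofReal (ζ x)) + s ≤ truncatedParabola k y)
    {G : ℝ → ℝ} (hG : AEStronglyMeasurable G) :
    ∑' n, ∫⁻ x, ‖(T0 ζ k)^[n] G x‖ₑ ≤ ENNReal.ofReal (9 * k ^ 2 / s) * ∫⁻ x, ‖G x‖ₑ := by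
  have hV := measurable_truncatedParabola k
  have hsum : ENNReal.ofReal s * ∑' n, ∫⁻ x, ‖(T0 ζ k)^[n] G x‖ₑ ≤
      ∫⁻ x, ‖G x‖ₑ * ENNReal.ofReal (truncatedParabola k x) := by
    rw [T0_eq_integralOperator]
    exact mul_tsum_lintegral_enorm_iterate_integralOperator_le
      (measurable_uncurry_deriv_hkfun_mul hζ k) hV.ennreal_ofReal
      (ae_of_all _ fun y => ofReal_add_lintegral_deriv_hkfun_mul_le hζ hζ0 hk hV
        (truncatedParabola_nonneg k) hs.le (integrable_truncatedParabola_add _ _) (hdrift y)) hG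
  have hbound : ∫⁻ x, ‖G x‖ₑ * ENNReal.ofReal (truncatedParabola k x) ≤
      ENNReal.ofReal (9 * k ^ 2) * ∫⁻ x, ‖G x‖ₑ := by
    rw [mul_comm, ← lintegral_mul_const'' _ hG.enorm]
    gcongr
    exact truncatedParabola_le _ _
  rw [ENNReal.ofReal_div_of_pos hs, ← ENNReal.mul_div_right_comm,
    ENNReal.le_div_iff_mul_le (by simp [hs]) (by simp), mul_comm]
  exact hsum.trans hbound

lemma integrable_sq_mul_of_exp_tail (hζ : Measurable ζ) (hζ0 : ∀ x, 0 ≤ ζ x)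
    (hint : Integrable ζ) {δ C : ℝ} (hδ : 0 < δ)
    (htail : ∀ x : ℝ, 0 ≤ x → ∫ y in {y : ℝ | x < |y|}, ζ y ≤ C * exp (-δ * x)) :
    Integrable fun x => x ^ 2 * ζ x := by
  rw [← integrable_withDensity_ofReal_iff hζ hζ0]
  have hmeasure : ∀ t > 0, volume.withDensity (fun x => ENNReal.ofReal (ζ x)) {x | t < ‖x‖} ≤
      ENNReal.ofReal (C * exp (-δ * t)) := by
    intro t ht
    rw [withDensity_apply _ (measurableSet_lt measurable_const measurable_norm),
      ← ofReal_integral_eq_lintegral_ofReal hint.integrableOn (ae_of_all _ hζ0)]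
    exact ENNReal.ofReal_le_ofReal (htail t ht.le)
  simpa only [id, norm_eq_abs, rpow_two, sq_abs] using
    integrable_norm_rpow_of_exp_tail aestronglyMeasurable_id hδ hmeasure two_pos

end LogisticStep

theorem stmt3_general {ζ : ℝ → ℝ} (hζ : Measurable ζ) (hζ0 : ∀ x, 0 ≤ ζ x)
    (hζ1 : ∫ x, ζ x = 1) (hmean : ∫ x, x * ζ x = 0) (h2 : Integrable fun x => x ^ 2 * ζ x) :
    ∀ᶠ k in atTop, ∀ G : ℝ → ℝ, AEStronglyMeasurable G →
      ∑' n : ℕ, ∫⁻ x, ENNReal.ofReal |(T0 ζ k)^[n] G x|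
        ≤ ENNReal.ofReal (18 / (∫ x, x ^ 2 * ζ x) * k ^ 2) * ∫⁻ x, ENNReal.ofReal |G x| := by
  have := isProbabilityMeasure_withDensity_ofReal hζ0 hζ1
  rw [← integrable_withDensity_ofReal_iff hζ hζ0] at h2
  simp only [← integral_withDensity_ofReal hζ hζ0] at hmean ⊢
  have hvar := integral_sq_pos h2
  filter_upwards [eventually_ge_atTop 0,
    eventually_deriv_mul_integral_truncatedParabola_add_le hmean h2 hvar] with k hk hdrift G hG
  simp only [← Real.enorm_eq_ofReal_abs]
  refine (tsum_lintegral_enorm_iterate_T0_le hζ hζ0 hk (half_pos hvar) hdrift hG).trans_eq ?_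
  congr 2
  ring

/-- Proposition: summability bound for the iterates of T₀. -/
theorem stmt3
    (ζ : ℝ → ℝ) (hζmeas : Measurable ζ) (hζnn : ∀ x, 0 ≤ ζ x)
    (hζprob : ∫ x, ζ x = 1)
    (hmean : ∫ x, x * ζ x = 0)
    (δ : ℝ) (hδ : 0 < δ) (Cδ : ℝ)
    (htail : ∀ x : ℝ, 0 ≤ x → ∫ y in {y : ℝ | x < |y|}, ζ y ≤ Cδ * Real.exp (-δ * x))
    (θ : ℝ) (hθ0 : 0 < θ) (hθ1 : θ ≤ 1) (Cθ : ℝ)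
    (hHolder : ∀ x y : ℝ, |ζ x - ζ y| ≤ Cθ * |x - y| ^ θ)
 :
    ∃ C : ℝ, 0 < C ∧ ∃ k₀ : ℝ, 0 < k₀ ∧ ∀ k ≥ k₀, ∀ G : ℝ → ℝ, Integrable G →
      ∑' n : ℕ, ∫⁻ x, ENNReal.ofReal |(T0 ζ k)^[n] G x|
        ≤ ENNReal.ofReal (k ^ 2 * Real.log k ^ C) * ∫⁻ x, ENNReal.ofReal |G x| := by
  have h2 := integrable_sq_mul_of_exp_tail hζmeas hζnn
    (.of_integral_ne_zero (hζprob.trans_ne one_ne_zero)) hδ htail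
  obtain ⟨k₀, hk₀⟩ := eventually_atTop.1 <|
    (stmt3_general hζmeas hζnn hζprob hmean h2).and <|
      tendsto_log_atTop.eventually_ge_atTop (18 / ∫ x, x ^ 2 * ζ x)
  refine ⟨1, one_pos, max k₀ 1, lt_max_of_lt_right one_pos, fun k hk G hG => ?_⟩
  obtain ⟨hsum, hlog⟩ := hk₀ k (le_of_max_le_left hk)
  refine (hsum G hG.aestronglyMeasurable).trans ?_
  rw [rpow_one, mul_comm (k ^ 2)]
  gcongr
end

section
/- With C and k₀ as in the summability bound for T₀, for every k ≥ k₀ and every probability measure γ on ℝ with tail function G_γ(x) = γ((x, ∞)) such that TG_γ − G_γ ∈ L¹, one has |𝓛(k) − L_k[G_γ]| ≤ ‖G_{ν_k} − G_γ‖₁ ≤ k² (log k)^C ‖TG_γ − G_γ‖₁, where ν_k is the invariant probability of the chain X and 𝓛(k) = L_k[G_{ν_k}]. -/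
open MeasureTheory ProbabilityTheory Real Filter Set
open scoped ENNReal

noncomputable def tailFn (ν : Measure ℝ) (x : ℝ) : ℝ := (ν (Set.Ioi x)).toReal

/-- The operator T acting on tail functions of probability measures (so G(-∞) = 1). -/
noncomputable def Tprob (ζ : ℝ → ℝ) (k : ℝ) (G : ℝ → ℝ) (x : ℝ) : ℝ :=
  (∫ t in Set.Ioi (k + x), ζ t) + ∫ y, G y * deriv (hkfun k) y * ζ (x - hkfun k y)

noncomputable def Lk (k : ℝ) (G : ℝ → ℝ) : ℝ := ∫ x, G x / (1 + Real.exp (k - x))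

/-! Substituting `s = h_k y` turns `T₀ G` into an integral of the bounded function `G ∘ h_k⁻¹`
over `(-k, k)` against translates of the integrable `ζ`, so `T₀` maps `L^∞` into `L¹ ∩ L^∞`.
By Fubini, `T` sends the tail of the law of `X` to the tail of the law of `𝚣 + h_k(X)`, so the
tail `F` of an invariant law is a fixed point of `T`. Hence `D = F - G` satisfies
`D - T₀ D = T G - G`, which makes `D` integrable, and telescoping `D = ∑ n, T₀ⁿ (T G - G)` in `L¹`
yields the second inequality. The first holds because the weight `1 / (1 + e^{k - x})` defining
`L_k` takes values in `(0, 1)`. -/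

lemma lintegral_enorm_le_tsum_lintegral_enorm_sub {α E : Type*} [MeasurableSpace α]
    {μ : Measure α} [NormedAddCommGroup E] {f : ℕ → α → E} (hf : ∀ n, Integrable (f n) μ)
    (hlim : Tendsto (fun n => ∫⁻ x, ‖f n x‖ₑ ∂μ) atTop (nhds 0)) :
    ∫⁻ x, ‖f 0 x‖ₑ ∂μ ≤ ∑' n, ∫⁻ x, ‖f n x - f (n + 1) x‖ₑ ∂μ := by
  have hnorm (n : ℕ) : edist (hf n).toL1 0 = ∫⁻ x, ‖f n x‖ₑ ∂μ := by
    rw [Integrable.edist_toL1_zero]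
    simp only [edist_zero_right]
  have htendsto : Tendsto (fun n => (hf n).toL1) atTop (nhds 0) := by
    rw [tendsto_iff_edist_tendsto_0]
    exact hlim.congr fun n => (hnorm n).symm
  have hstep (n : ℕ) : edist (hf n).toL1 (hf (n + 1)).toL1
      ≤ ∫⁻ x, ‖f n x - f (n + 1) x‖ₑ ∂μ := by
    rw [Integrable.edist_toL1_toL1]
    simp only [edist_eq_enorm_sub, le_refl]
  calc ∫⁻ x, ‖f 0 x‖ₑ ∂μ = edist (hf 0).toL1 0 := (hnorm 0).symm
    _ ≤ _ := edist_le_tsum_of_edist_le_of_tendsto₀ _ hstep htendsto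

section hkfun

variable {k : ℝ}

lemma exp_hkfun (k x : ℝ) : exp (hkfun k x) = (exp (-k) + exp x) / (1 + exp (x - k)) :=
  exp_log (by positivity)

lemma neg_lt_hkfun (hk : 0 < k) (x : ℝ) : -k < hkfun k x := by
  rw [← exp_lt_exp, exp_hkfun, lt_div_iff₀ (by positivity), mul_add, mul_one, ← exp_add]
  gcongr
  linarith

lemma hkfun_lt (hk : 0 < k) (x : ℝ) : hkfun k x < k := by
  rw [← exp_lt_exp, exp_hkfun, div_lt_iff₀ (by positivity), mul_add, mul_one, ← exp_add,
    add_sub_cancel]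
  gcongr
  linarith

lemma exists_hkfun_eq {s : ℝ} (hs : s ∈ Ioo (-k) k) : ∃ y, hkfun k y = s := by
  have hnum : 0 < exp s - exp (-k) := sub_pos.2 (exp_lt_exp.2 hs.1)
  have hden : 0 < 1 - exp s * exp (-k) := by
    rw [← exp_add, sub_pos, exp_lt_one_iff]
    linarith [hs.2]
  refine ⟨log ((exp s - exp (-k)) / (1 - exp s * exp (-k))), exp_injective ?_⟩
  rw [exp_hkfun, div_eq_iff (by positivity), sub_eq_add_neg _ k, exp_add,
    exp_log (div_pos hnum hden)]
  linear_combination div_mul_cancel₀ (exp s - exp (-k)) hden.ne'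

lemma hasDerivAt_hkfun (k y : ℝ) :
    HasDerivAt (hkfun k) (sigmoid (y + k) - sigmoid (y - k)) y := by
  have hnum : HasDerivAt (fun x => exp (-k) + exp x) (exp y) y :=
    (Real.hasDerivAt_exp y).const_add _
  have hden : HasDerivAt (fun x => 1 + exp (x - k)) (exp (y - k)) y := by
    simpa only [id, mul_one] using (((hasDerivAt_id y).sub_const k).exp).const_add 1
  have hlog : hkfun k = fun x => log (exp (-k) + exp x) - log (1 + exp (x - k)) :=
    funext fun x => log_div (by positivity) (by positivity)
  rw [hlog]
  have hσnum : sigmoid (y + k) = exp y / (exp (-k) + exp y) := by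
    rw [sigmoid_def, neg_add, exp_add, exp_neg y]
    field_simp
    ring
  have hσden : sigmoid (y - k) = exp (y - k) / (1 + exp (y - k)) := by
    rw [sigmoid_def, exp_neg]
    field_simp
    ring
  rw [hσnum, hσden]
  exact (hnum.log (by positivity)).sub (hden.log (by positivity))

lemma strictMono_hkfun (hk : 0 < k) : StrictMono (hkfun k) :=
  strictMono_of_hasDerivAt_pos (hasDerivAt_hkfun k) fun y =>
    sub_pos.2 (sigmoid_lt (by linarith))

lemma continuous_hkfun (k : ℝ) : Continuous (hkfun k) :=
  continuous_iff_continuousAt.2 fun y => (hasDerivAt_hkfun k y).continuousAt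

lemma image_hkfun_Iio (hk : 0 < k) (z : ℝ) : hkfun k '' Iio z = Ioo (-k) (hkfun k z) := by
  ext s
  constructor
  · rintro ⟨y, hy, rfl⟩
    exact ⟨neg_lt_hkfun hk y, strictMono_hkfun hk hy⟩
  · rintro ⟨hs, hsz⟩
    obtain ⟨y, rfl⟩ := exists_hkfun_eq ⟨hs, hsz.trans (hkfun_lt hk z)⟩
    exact ⟨y, (strictMono_hkfun hk).lt_iff_lt.1 hsz, rfl⟩

lemma integrable_deriv_hkfun_mul_comp (hk : 0 < k) {f : ℝ → ℝ}
    (hf : IntegrableOn f (Ioo (-k) k)) :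
    Integrable fun y => deriv (hkfun k) y * f (hkfun k y) := by
  have himage : hkfun k '' univ ⊆ Ioo (-k) k := by
    rintro _ ⟨y, -, rfl⟩
    exact ⟨neg_lt_hkfun hk y, hkfun_lt hk y⟩
  exact integrableOn_univ.1 <| (integrableOn_image_iff_integrableOn_deriv_smul_of_monotoneOn .univ
    (fun y _ => (hasDerivAt_hkfun k y).differentiableAt.hasDerivAt.hasDerivWithinAt)
    ((strictMono_hkfun hk).monotone.monotoneOn _) f).1 (hf.mono_set himage)

lemma setIntegral_deriv_hkfun_mul_comp (hk : 0 < k) (f : ℝ → ℝ) {s : Set ℝ}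
    (hs : MeasurableSet s) :
    ∫ y in s, deriv (hkfun k) y * f (hkfun k y) = ∫ t in hkfun k '' s, f t :=
  (integral_image_eq_integral_deriv_smul_of_monotoneOn hs
    (fun y _ => (hasDerivAt_hkfun k y).differentiableAt.hasDerivAt.hasDerivWithinAt)
    ((strictMono_hkfun hk).monotone.monotoneOn _) f).symm

lemma integrable_deriv_hkfun (hk : 0 < k) : Integrable (deriv (hkfun k)) := by
  simpa only [mul_one] using
    integrable_deriv_hkfun_mul_comp hk (f := fun _ => 1) (integrableOn_const (by simp))

end hkfun

section T0

variable {ζ G : ℝ → ℝ} {k : ℝ}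

lemma integrable_deriv_hkfun_mul_comp_sub (hζ : Integrable ζ) (hk : 0 < k) (x : ℝ) :
    Integrable fun y => deriv (hkfun k) y * ζ (x - hkfun k y) :=
  integrable_deriv_hkfun_mul_comp hk (hζ.comp_sub_left x).integrableOn

lemma integrable_T0_integrand (hζ : Integrable ζ) (hk : 0 < k) (hG : MemLp G ⊤) (x : ℝ) :
    Integrable fun y => G y * deriv (hkfun k) y * ζ (x - hkfun k y) := by
  simp only [mul_assoc]
  exact (integrable_deriv_hkfun_mul_comp_sub hζ hk x).smul_of_top_right hG

lemma T0_sub {F : ℝ → ℝ} (hζ : Integrable ζ) (hk : 0 < k) (hF : MemLp F ⊤) (hG : MemLp G ⊤) :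
    T0 ζ k (F - G) = T0 ζ k F - T0 ζ k G := by
  ext x
  simp only [T0, Pi.sub_apply, sub_mul]
  exact integral_sub (integrable_T0_integrand hζ hk hF x) (integrable_T0_integrand hζ hk hG x)

lemma integrable_T0_of_integrable_mul_deriv (hζ : Integrable ζ)
    (hG : Integrable fun y => G y * deriv (hkfun k) y) : Integrable (T0 ζ k G) := by
  have hh : Measurable (hkfun k) := (continuous_hkfun k).measurable
  have hshear : Measure.QuasiMeasurePreserving (fun p : ℝ × ℝ => p.1 - hkfun k p.2)
      (volume.prod volume) volume :=
    QuasiMeasurePreserving.prod_of_left (by fun_prop) <| .of_forall fun y =>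
      (measurePreserving_sub_right volume (hkfun k y)).quasiMeasurePreserving
  have hmeas : AEStronglyMeasurable
      (fun p : ℝ × ℝ => G p.2 * deriv (hkfun k) p.2 * ζ (p.1 - hkfun k p.2))
      (volume.prod volume) :=
    hG.aestronglyMeasurable.comp_snd.mul
      (hζ.aestronglyMeasurable.comp_quasiMeasurePreserving hshear)
  refine Integrable.integral_prod_left ((integrable_prod_iff' hmeas).2 ⟨?_, ?_⟩)
  · exact .of_forall fun y =>
      (hζ.comp_sub_right (hkfun k y)).const_mul (G y * deriv (hkfun k) y)
  · have hnorm (y : ℝ) : ∫ x, ‖G y * deriv (hkfun k) y * ζ (x - hkfun k y)‖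
        = ‖G y * deriv (hkfun k) y‖ * ∫ x, ‖ζ x‖ := by
      simp only [norm_mul, integral_const_mul, integral_sub_right_eq_self (fun x => ‖ζ x‖)]
    simpa only [hnorm] using hG.norm.mul_const _

lemma integrable_T0 (hζ : Integrable ζ) (hk : 0 < k) (hG : MemLp G ⊤) :
    Integrable (T0 ζ k G) :=
  integrable_T0_of_integrable_mul_deriv hζ ((integrable_deriv_hkfun hk).smul_of_top_right hG)

lemma norm_T0_le (hζ : Integrable ζ) (hk : 0 < k) {B : ℝ} (hB : ∀ᵐ y, ‖G y‖ ≤ B) (x : ℝ) :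
    ‖T0 ζ k G x‖ ≤ B * ∫ t, ‖ζ t‖ := by
  have hB₀ : 0 ≤ B := let ⟨y, hy⟩ := hB.exists; (norm_nonneg _).trans hy
  have hbound : ∀ᵐ y, ‖G y * deriv (hkfun k) y * ζ (x - hkfun k y)‖
      ≤ B * (deriv (hkfun k) y * ‖ζ (x - hkfun k y)‖) := by
    filter_upwards [hB] with y hy
    have hderiv : 0 ≤ deriv (hkfun k) y := (strictMono_hkfun hk).monotone.deriv_nonneg
    rw [mul_assoc, norm_mul, norm_mul, Real.norm_of_nonneg hderiv]
    gcongr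
  calc ‖T0 ζ k G x‖
      ≤ ∫ y, B * (deriv (hkfun k) y * ‖ζ (x - hkfun k y)‖) :=
        norm_integral_le_of_norm_le
          ((integrable_deriv_hkfun_mul_comp_sub hζ.norm hk x).const_mul B) hbound
    _ = B * ∫ s in hkfun k '' univ, ‖ζ (x - s)‖ := by
        rw [integral_const_mul, ← setIntegral_univ,
          setIntegral_deriv_hkfun_mul_comp hk (fun s => ‖ζ (x - s)‖) .univ]
    _ ≤ B * ∫ s, ‖ζ (x - s)‖ := by
        gcongr
        · exact .of_forall fun s => norm_nonneg _
        · exact (hζ.comp_sub_left x).norm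
        · exact Measure.restrict_le_self
    _ = B * ∫ t, ‖ζ t‖ := by rw [integral_sub_left_eq_self (fun t => ‖ζ t‖)]

lemma memLp_top_T0 (hζ : Integrable ζ) (hk : 0 < k) (hG : MemLp G ⊤) : MemLp (T0 ζ k G) ⊤ :=
  memLp_top_of_bound (integrable_T0 hζ hk hG).aestronglyMeasurable _ <| .of_forall <|
    norm_T0_le hζ hk (ae_le_lpNorm_exponent_top hG)

lemma memLp_top_iterate_T0 (hζ : Integrable ζ) (hk : 0 < k) (hG : MemLp G ⊤) (n : ℕ) :
    MemLp ((T0 ζ k)^[n] G) ⊤ :=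
  Function.Iterate.rec (fun F : ℝ → ℝ => MemLp F ⊤) hG (fun _ => memLp_top_T0 hζ hk) n

lemma integrable_iterate_T0 (hζ : Integrable ζ) (hk : 0 < k) (hG : MemLp G ⊤)
    (hG₁ : Integrable G) : ∀ n, Integrable ((T0 ζ k)^[n] G)
  | 0 => hG₁
  | n + 1 => by
    rw [Function.iterate_succ_apply']
    exact integrable_T0 hζ hk (memLp_top_iterate_T0 hζ hk hG n)

lemma iterate_T0_sub {F : ℝ → ℝ} (hζ : Integrable ζ) (hk : 0 < k) (hF : MemLp F ⊤)
    (hG : MemLp G ⊤) (n : ℕ) :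
    (T0 ζ k)^[n] (F - G) = (T0 ζ k)^[n] F - (T0 ζ k)^[n] G := by
  induction n with
  | zero => rfl
  | succ n ih =>
    simp only [Function.iterate_succ_apply', ih, T0_sub hζ hk (memLp_top_iterate_T0 hζ hk hF n)
      (memLp_top_iterate_T0 hζ hk hG n)]

lemma lintegral_enorm_le_of_tsum_iterate_T0_le (hζ : Integrable ζ) (hk : 0 < k) {K : NNReal}
    (hK : ∀ G : ℝ → ℝ, Integrable G →
      ∑' n : ℕ, ∫⁻ x, ‖(T0 ζ k)^[n] G x‖ₑ ≤ K * ∫⁻ x, ‖G x‖ₑ)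
    (hG : MemLp G ⊤) (hG₁ : Integrable G) :
    ∫⁻ x, ‖G x‖ₑ ≤ K * ∫⁻ x, ‖(G - T0 ζ k G) x‖ₑ := by
  have hsummable : ∑' n : ℕ, ∫⁻ x, ‖(T0 ζ k)^[n] G x‖ₑ ≠ ⊤ :=
    ne_top_of_le_ne_top (ENNReal.mul_ne_top ENNReal.coe_ne_top hG₁.2.ne) (hK G hG₁)
  have hdefect (n : ℕ) : (T0 ζ k)^[n] (G - T0 ζ k G)
      = (T0 ζ k)^[n] G - (T0 ζ k)^[n + 1] G := by
    rw [iterate_T0_sub hζ hk hG (memLp_top_T0 hζ hk hG), Function.iterate_succ_apply]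
  calc ∫⁻ x, ‖G x‖ₑ
      ≤ ∑' n : ℕ, ∫⁻ x, ‖(T0 ζ k)^[n] G x - (T0 ζ k)^[n + 1] G x‖ₑ :=
        lintegral_enorm_le_tsum_lintegral_enorm_sub (integrable_iterate_T0 hζ hk hG hG₁)
          (ENNReal.tendsto_atTop_zero_of_tsum_ne_top hsummable)
    _ = ∑' n : ℕ, ∫⁻ x, ‖(T0 ζ k)^[n] (G - T0 ζ k G) x‖ₑ := by simp only [hdefect, Pi.sub_apply]
    _ ≤ K * ∫⁻ x, ‖(G - T0 ζ k G) x‖ₑ := hK _ (hG₁.sub (integrable_T0 hζ hk hG))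

end T0

section tailFn

lemma antitone_tailFn (ν : Measure ℝ) [IsFiniteMeasure ν] : Antitone (tailFn ν) :=
  fun _ _ hxy => measureReal_mono (Ioi_subset_Ioi hxy)

lemma tailFn_nonneg (ν : Measure ℝ) (x : ℝ) : 0 ≤ tailFn ν x :=
  ENNReal.toReal_nonneg

lemma memLp_top_tailFn (ν : Measure ℝ) [IsFiniteMeasure ν] : MemLp (tailFn ν) ⊤ :=
  memLp_top_of_bound (antitone_tailFn ν).measurable.aestronglyMeasurable (ν.real univ) <|
    .of_forall fun x => by
      rw [Real.norm_of_nonneg (tailFn_nonneg ν x)]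
      exact measureReal_mono (subset_univ _)

variable {φ : ℝ → ℝ}

lemma integrable_indicator_Iio_prod (ν : Measure ℝ) [IsFiniteMeasure ν] (hφ : Integrable φ) :
    Integrable (fun p : ℝ × ℝ => (Iio p.1).indicator φ p.2) (ν.prod volume) :=
  (hφ.comp_snd ν).indicator (measurableSet_lt measurable_snd measurable_fst)

lemma integrable_setIntegral_Iio (ν : Measure ℝ) [IsFiniteMeasure ν] (hφ : Integrable φ) :
    Integrable (fun z => ∫ y in Iio z, φ y) ν := by
  simpa only [integral_indicator measurableSet_Iio] using
    (integrable_indicator_Iio_prod ν hφ).integral_prod_left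

lemma integral_setIntegral_Iio (ν : Measure ℝ) [IsFiniteMeasure ν] (hφ : Integrable φ) :
    ∫ z, (∫ y in Iio z, φ y) ∂ν = ∫ y, tailFn ν y * φ y := by
  have hsection (y : ℝ) : ∫ z, (Iio z).indicator φ y ∂ν = tailFn ν y * φ y := by
    change ∫ z, (Ioi y).indicator (fun _ => φ y) z ∂ν = _
    rw [integral_indicator_const _ measurableSet_Ioi]
    rfl
  calc ∫ z, (∫ y in Iio z, φ y) ∂ν = ∫ z, (∫ y, (Iio z).indicator φ y) ∂ν := by
        simp only [integral_indicator measurableSet_Iio]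
    _ = ∫ y, (∫ z, (Iio z).indicator φ y ∂ν) :=
        integral_integral_swap (integrable_indicator_Iio_prod ν hφ)
    _ = ∫ y, tailFn ν y * φ y := by simp only [hsection]

end tailFn

section Tprob

variable {ζ : ℝ → ℝ} {k : ℝ}

lemma Tprob_sub_Tprob {F G : ℝ → ℝ} (hζ : Integrable ζ) (hk : 0 < k) (hF : MemLp F ⊤)
    (hG : MemLp G ⊤) : Tprob ζ k F - Tprob ζ k G = T0 ζ k (F - G) := by
  rw [T0_sub hζ hk hF hG]
  exact funext fun x => add_sub_add_left_eq_sub _ _ _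

lemma setIntegral_Ioi_sub_hkfun (hζ : Integrable ζ) (hk : 0 < k) (x z : ℝ) :
    ∫ t in Ioi (x - hkfun k z), ζ t = (∫ t in Ioi (k + x), ζ t) +
      ∫ y in Iio z, deriv (hkfun k) y * ζ (x - hkfun k y) := by
  have hle : -k ≤ hkfun k z := (neg_lt_hkfun hk z).le
  have hIio : ∫ y in Iio z, deriv (hkfun k) y * ζ (x - hkfun k y)
      = ∫ t in Ioc (x - hkfun k z) (k + x), ζ t := by
    rw [setIntegral_deriv_hkfun_mul_comp hk (fun s => ζ (x - s)) measurableSet_Iio,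
      image_hkfun_Iio hk, ← integral_Ioc_eq_integral_Ioo, ← intervalIntegral.integral_of_le hle,
      intervalIntegral.integral_comp_sub_left, sub_neg_eq_add, add_comm x,
      intervalIntegral.integral_of_le (by linarith)]
  rw [hIio, add_comm, ← setIntegral_union Ioc_disjoint_Ioi_same measurableSet_Ioi
    hζ.integrableOn hζ.integrableOn, Ioc_union_Ioi_eq_Ioi (by linarith)]

lemma Tprob_tailFn (hζ : Integrable ζ) (hk : 0 < k) (ν : Measure ℝ) [IsProbabilityMeasure ν]
    (x : ℝ) : Tprob ζ k (tailFn ν) x = ∫ y, (∫ t in Ioi (x - hkfun k y), ζ t) ∂ν := by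
  have hφ := integrable_deriv_hkfun_mul_comp_sub hζ hk x
  simp only [setIntegral_Ioi_sub_hkfun hζ hk x]
  rw [integral_add (integrable_const _) (integrable_setIntegral_Iio ν hφ),
    integral_setIntegral_Iio ν hφ, integral_const, probReal_univ, one_smul]
  simp only [Tprob, mul_assoc]

end Tprob

section Lk

variable {F G : ℝ → ℝ} {k : ℝ}

lemma Lk_eq_integral_mul_sigmoid (k : ℝ) (G : ℝ → ℝ) : Lk k G = ∫ x, G x * sigmoid (x - k) := by
  simp only [Lk, div_eq_mul_inv, sigmoid_def, neg_sub]

lemma norm_sigmoid_le_one (x : ℝ) : ‖sigmoid x‖ ≤ 1 := by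
  rw [Real.norm_of_nonneg (sigmoid_nonneg x)]
  exact sigmoid_le_one x

lemma sigmoid_le_exp (x : ℝ) : sigmoid x ≤ exp x := by
  rw [sigmoid_def, inv_le_comm₀ (by positivity) (exp_pos x), ← exp_neg]
  linarith

lemma integrable_mul_sigmoid_sub (hG : Integrable G) (k : ℝ) :
    Integrable fun x => G x * sigmoid (x - k) :=
  hG.mul_bdd (c := 1) (by fun_prop) (.of_forall fun x => norm_sigmoid_le_one _)

lemma integrable_mul_sigmoid_sub_of_integrableOn_Ioi (hG : MemLp G ⊤)
    (hGk : IntegrableOn G (Ioi k)) : Integrable fun x => G x * sigmoid (x - k) := by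
  have hσ : IntegrableOn (fun x => sigmoid (x - k)) (Iic k) := by
    have hexp : IntegrableOn (fun x => exp (-k) * exp x) (Iic k) :=
      (integrableOn_exp_Iic k).const_mul _
    refine hexp.mono' (by fun_prop) (.of_forall fun x => ?_)
    rw [Real.norm_of_nonneg (sigmoid_nonneg _), ← exp_add, neg_add_eq_sub]
    exact sigmoid_le_exp _
  rw [← integrableOn_univ, ← Iic_union_Ioi (a := k)]
  refine IntegrableOn.union (hσ.smul_of_top_right (hG.restrict _)) ?_
  exact hGk.mul_bdd (c := 1) (by fun_prop) (.of_forall fun x => norm_sigmoid_le_one _)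

lemma enorm_Lk_sub_Lk_le (hF : Integrable fun x => F x * sigmoid (x - k))
    (hFG : Integrable (F - G)) : ‖Lk k F - Lk k G‖ₑ ≤ ∫⁻ x, ‖F x - G x‖ₑ := by
  have hG : Integrable fun x => G x * sigmoid (x - k) := by
    refine (hF.sub (integrable_mul_sigmoid_sub hFG k)).congr (.of_forall fun x => ?_)
    simp only [Pi.sub_apply]
    ring
  rw [Lk_eq_integral_mul_sigmoid, Lk_eq_integral_mul_sigmoid, ← integral_sub hF hG]
  refine (enorm_integral_le_lintegral_enorm _).trans (lintegral_mono fun x => ?_)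
  rw [← sub_mul, enorm_mul]
  exact mul_le_of_le_one_right' (enorm_le_coe.2 (norm_sigmoid_le_one _))

end Lk

section rightTail

variable {ζ : ℝ → ℝ} {k : ℝ}

lemma antitone_setIntegral_Ioi (hζ : Integrable ζ) (hζnn : 0 ≤ ζ) :
    Antitone fun x => ∫ t in Ioi x, ζ t := fun _ _ hxy =>
  setIntegral_mono_set hζ.integrableOn (.of_forall hζnn) (Ioi_subset_Ioi hxy).eventuallyLE

lemma integrableOn_setIntegral_Ioi_of_exp_tail (hζ : Integrable ζ) (hζnn : 0 ≤ ζ) {c δ : ℝ}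
    (hδ : 0 < δ) (htail : ∀ x, 0 ≤ x → ∫ y in {y : ℝ | x < |y|}, ζ y ≤ c * exp (-δ * x)) :
    IntegrableOn (fun x => ∫ t in Ioi x, ζ t) (Ioi 0) := by
  have hexp : IntegrableOn (fun x => c * exp (-δ * x)) (Ioi 0) :=
    (exp_neg_integrableOn_Ioi 0 hδ).const_mul c
  refine hexp.mono' (antitone_setIntegral_Ioi hζ hζnn).measurable.aestronglyMeasurable ?_
  filter_upwards [ae_restrict_mem measurableSet_Ioi] with x hx
  rw [Real.norm_of_nonneg (setIntegral_nonneg measurableSet_Ioi fun t _ => hζnn t)]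
  have hsubset : Ioi x ⊆ {y : ℝ | x < |y|} := fun y hy => lt_of_lt_of_le hy (le_abs_self y)
  exact (setIntegral_mono_set hζ.integrableOn (.of_forall hζnn) hsubset.eventuallyLE).trans
    (htail x (le_of_lt hx))

lemma tailFn_le_setIntegral_Ioi_sub (hζ : Integrable ζ) (hζnn : 0 ≤ ζ) (hk : 0 < k)
    {ν : Measure ℝ} [IsProbabilityMeasure ν]
    (hν : ∀ x, tailFn ν x = ∫ y, (∫ t in Ioi (x - hkfun k y), ζ t) ∂ν) (x : ℝ) :
    tailFn ν x ≤ ∫ t in Ioi (x - k), ζ t := by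
  calc tailFn ν x = ∫ y, (∫ t in Ioi (x - hkfun k y), ζ t) ∂ν := hν x
    _ ≤ ∫ _, (∫ t in Ioi (x - k), ζ t) ∂ν :=
        integral_mono_of_nonneg
          (.of_forall fun y => setIntegral_nonneg measurableSet_Ioi fun t _ => hζnn t)
          (integrable_const _)
          (.of_forall fun y => antitone_setIntegral_Ioi hζ hζnn (by linarith [hkfun_lt hk y]))
    _ = ∫ t in Ioi (x - k), ζ t := by rw [integral_const, probReal_univ, one_smul]

lemma integrable_tailFn_mul_sigmoid_sub (hζ : Integrable ζ) (hζnn : 0 ≤ ζ)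
    (htail : IntegrableOn (fun x => ∫ t in Ioi x, ζ t) (Ioi 0)) (hk : 0 < k)
    {ν : Measure ℝ} [IsProbabilityMeasure ν]
    (hν : ∀ x, tailFn ν x = ∫ y, (∫ t in Ioi (x - hkfun k y), ζ t) ∂ν) :
    Integrable fun x => tailFn ν x * sigmoid (x - k) := by
  have hshift : IntegrableOn (fun x => ∫ t in Ioi (x - k), ζ t) (Ioi k) := by
    have := (measurePreserving_sub_right volume k).integrableOn_comp_preimage
      (measurableEmbedding_subRight k) (f := fun x => ∫ t in Ioi x, ζ t) (s := Ioi 0)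
    rw [preimage_sub_const_Ioi, zero_add] at this
    exact this.2 htail
  refine integrable_mul_sigmoid_sub_of_integrableOn_Ioi (memLp_top_tailFn ν)
    (hshift.mono' (antitone_tailFn ν).measurable.aestronglyMeasurable (.of_forall fun x => ?_))
  rw [Real.norm_of_nonneg (tailFn_nonneg ν x)]
  exact tailFn_le_setIntegral_Ioi_sub hζ hζnn hk hν x

end rightTail

-- `Tprob` hard-codes `G(-∞) = 1`; for a general `G` this reads `tailFn ν - G ∈ L¹`, by `hTG`.
theorem stmt4_general {ζ : ℝ → ℝ} (hζ : Integrable ζ) (hζnn : 0 ≤ ζ)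
    (htail : IntegrableOn (fun x => ∫ t in Ioi x, ζ t) (Ioi 0)) {k : ℝ} (hk : 0 < k) {K : NNReal}
    (hK : ∀ G : ℝ → ℝ, Integrable G →
      ∑' n : ℕ, ∫⁻ x, ‖(T0 ζ k)^[n] G x‖ₑ ≤ K * ∫⁻ x, ‖G x‖ₑ)
    {ν : Measure ℝ} [IsProbabilityMeasure ν]
    (hν : ∀ x, tailFn ν x = ∫ y, (∫ t in Ioi (x - hkfun k y), ζ t) ∂ν)
    {G : ℝ → ℝ} (hG : MemLp G ⊤) (hTG : Integrable (Tprob ζ k G - G)) :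
    ‖Lk k (tailFn ν) - Lk k G‖ₑ ≤ ∫⁻ x, ‖tailFn ν x - G x‖ₑ ∧
      ∫⁻ x, ‖tailFn ν x - G x‖ₑ ≤ K * ∫⁻ x, ‖Tprob ζ k G x - G x‖ₑ := by
  have hF := memLp_top_tailFn ν
  have hD : MemLp (tailFn ν - G) ⊤ := hF.sub hG
  have hfixed : Tprob ζ k (tailFn ν) = tailFn ν :=
    funext fun x => (Tprob_tailFn hζ hk ν x).trans (hν x).symm
  have hdefect : (tailFn ν - G) - T0 ζ k (tailFn ν - G) = Tprob ζ k G - G := by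
    rw [← Tprob_sub_Tprob hζ hk hF hG, hfixed, sub_sub_sub_cancel_left]
  have hDint : Integrable (tailFn ν - G) := by
    rw [← sub_add_cancel (tailFn ν - G) (T0 ζ k (tailFn ν - G)), hdefect]
    exact hTG.add (integrable_T0 hζ hk hD)
  refine ⟨enorm_Lk_sub_Lk_le (integrable_tailFn_mul_sigmoid_sub hζ hζnn htail hk hν) hDint, ?_⟩
  have hbound := lintegral_enorm_le_of_tsum_iterate_T0_le hζ hk hK hD hDint
  rw [hdefect] at hbound
  exact hbound

/-- Corollary: comparison of the Lyapunov exponent with the value on any probability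
tail function, via the one-step defect. -/
theorem stmt4
    (ζ : ℝ → ℝ) (hζmeas : Measurable ζ) (hζnn : ∀ x, 0 ≤ ζ x)
    (hζprob : ∫ x, ζ x = 1)
    (hmean : ∫ x, x * ζ x = 0)
    (δ : ℝ) (hδ : 0 < δ) (Cδ : ℝ)
    (htail : ∀ x : ℝ, 0 ≤ x → ∫ y in {y : ℝ | x < |y|}, ζ y ≤ Cδ * Real.exp (-δ * x))
    (θ : ℝ) (hθ0 : 0 < θ) (hθ1 : θ ≤ 1) (Cθ : ℝ)
    (hHolder : ∀ x y : ℝ, |ζ x - ζ y| ≤ Cθ * |x - y| ^ θ)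
    (C k₀ : ℝ) (hC : 0 < C) (hk₀ : 0 < k₀)
    (hprop : ∀ k ≥ k₀, ∀ G : ℝ → ℝ, Integrable G →
      ∑' n : ℕ, ∫⁻ x, ENNReal.ofReal |(T0 ζ k)^[n] G x|
        ≤ ENNReal.ofReal (k ^ 2 * Real.log k ^ C) * ∫⁻ x, ENNReal.ofReal |G x|)
    (k : ℝ) (hk : k₀ ≤ k)
    (ν : Measure ℝ) [IsProbabilityMeasure ν]
    (hinv : ∀ x : ℝ, tailFn ν x = ∫ y, (∫ t in Set.Ioi (x - hkfun k y), ζ t) ∂ν)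
    (γ : Measure ℝ) [IsProbabilityMeasure γ]
    (hL1 : Integrable (fun x => Tprob ζ k (tailFn γ) x - tailFn γ x)) :
    ENNReal.ofReal |Lk k (tailFn ν) - Lk k (tailFn γ)|
        ≤ ∫⁻ x, ENNReal.ofReal |tailFn ν x - tailFn γ x| ∧
      ∫⁻ x, ENNReal.ofReal |tailFn ν x - tailFn γ x|
        ≤ ENNReal.ofReal (k ^ 2 * Real.log k ^ C)
            * ∫⁻ x, ENNReal.ofReal |Tprob ζ k (tailFn γ) x - tailFn γ x| := by
  have hζ : Integrable ζ := .of_integral_ne_zero (hζprob ▸ one_ne_zero)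
  simp only [← Real.enorm_eq_ofReal_abs] at hprop ⊢
  exact stmt4_general hζ hζnn (integrableOn_setIntegral_Ioi_of_exp_tail hζ hζnn hδ htail)
    (hk₀.trans_le hk) (hprop k hk) hinv (memLp_top_tailFn γ) hL1
end

section
/- The Markov chain Y defined by Y_{n+1} = 𝚣_{n+1} + h(Y_n) has a unique (up to a multiplicative constant) invariant σ-finite measure ν; this measure satisfies ν((−∞, x]) < ∞ for every x ∈ ℝ, but ν(ℝ) = ∞. -/
open MeasureTheory ProbabilityTheory Real Filter Set
open scoped ENNReal

noncomputable def hY (y : ℝ) : ℝ := y + Real.log (1 + Real.exp (-y))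

/-- A σ-finite measure ν is invariant for the chain Y_{n+1} = z_{n+1} + hY (Y_n),
where the increments have density ζ. -/
def IsInvariantY (ζ : ℝ → ℝ) (ν : Measure ℝ) : Prop :=
  ∀ g : ℝ → ℝ≥0∞, Measurable g →
    ∫⁻ z, g z ∂ν = ∫⁻ y, ∫⁻ z, g (z + hY y) * ENNReal.ofReal (ζ z) ∂volume ∂ν

/-
Call an interval `C` around a fixed point of `y ↦ z₀ + h y`, with `z₀ < 0` and `ζ z₀ > 0`, small if
the transition kernel `P` dominates a fixed measure `φ ≠ 0` on it. Splitting off `φ` on `C` leaves a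
substochastic kernel `Q`, and every invariant measure `ν` dominates `ν C • ∑ₙ φ Qⁿ`. The chain is
recurrent: far to the right `h y - y ≤ e^{-y}` is negligible, so the strict concavity of the
logarithm makes `log (1 + y⁺)` decrease on average, while noise close to `z₀` contracts any left
half-line into `C`. Recurrence turns `∑ₙ φ Qⁿ` into an invariant measure giving mass one to `C`,
hence equal to `ν` up to the factor `ν C`. Left half-lines have finite mass because `C` is reached
from them in a fixed number of steps with probability bounded below. The total mass is infinite: a
stationary `Y` would have the law of `z + h Y`, which is impossible as `E z = 0` and `h Y > Y`.
-/

section Splitting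

open scoped Topology

variable {α : Type*} {mα : MeasurableSpace α} {P Q : Kernel α α} {C : Set α} {φ μ ν : Measure α}

lemma invariant_pow (hν : Kernel.Invariant P ν) (n : ℕ) : Kernel.Invariant (P ^ n) ν := by
  induction n with
  | zero => exact Measure.id_comp
  | succ n ih => exact pow_succ P n ▸ ih.comp hν

lemma lintegral_pow_apply_of_invariant (hν : Kernel.Invariant P ν) (n : ℕ) {A : Set α}
    (hA : MeasurableSet A) : ∫⁻ y, (P ^ n) y A ∂ν = ν A := by
  rw [← Measure.bind_apply hA (Kernel.aemeasurable _), (invariant_pow hν n).def]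

lemma measure_lt_top_of_invariant (hν : Kernel.Invariant P ν) (hC : MeasurableSet C)
    (hνC : ν C < ⊤) {A : Set α} {n : ℕ} {p : ℝ≥0∞} (hp : p ≠ 0) (hA : ∀ y ∈ A, p ≤ (P ^ n) y C) :
    ν A < ⊤ := by
  have hbound : p * ν A < ⊤ := calc
    p * ν A ≤ p * ν {y | p ≤ (P ^ n) y C} := by gcongr; exact hA
    _ ≤ ∫⁻ y, (P ^ n) y C ∂ν := mul_meas_ge_le_lintegral (Kernel.measurable_coe _ hC) p
    _ = ν C := lintegral_pow_apply_of_invariant hν n hC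
    _ < ⊤ := hνC
  exact ENNReal.lt_top_of_mul_ne_top_right hbound.ne hp

lemma sigmaFinite_of_invariant (hν : Kernel.Invariant P ν) (hC : MeasurableSet C)
    (hνC : ν C < ⊤) (hacc : ∀ y, ∃ n, (P ^ n) y C ≠ 0) : SigmaFinite ν := by
  let level : ℕ × ℕ → Set α := fun i => {y | (i.2 : ℝ≥0∞)⁻¹ ≤ (P ^ i.1) y C}
  refine Measure.sigmaFinite_of_countable (S := range level) (countable_range _) ?_ ?_
  · rintro _ ⟨i, rfl⟩
    exact measure_lt_top_of_invariant hν hC hνC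
      (ENNReal.inv_ne_zero.2 (ENNReal.natCast_ne_top _)) fun y hy => hy
  · refine eq_univ_of_forall fun y => ?_
    obtain ⟨n, hn⟩ := hacc y
    obtain ⟨k, hk⟩ := ENNReal.exists_inv_nat_lt hn
    exact mem_sUnion.2 ⟨level (n, k), mem_range_self _, hk.le⟩

lemma restrict_support_eq_of_le (hμν : μ ≤ ν) {g : α → ℝ≥0∞} (hg : Measurable g)
    (heq : ∫⁻ y, g y ∂μ = ∫⁻ y, g y ∂ν) (hfin : ∫⁻ y, g y ∂ν ≠ ⊤) :
    μ.restrict (Function.support g) = ν.restrict (Function.support g) := by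
  have hdensity : μ.withDensity g = ν.withDensity g := by
    have : IsFiniteMeasure (μ.withDensity g) := isFiniteMeasure_withDensity (heq ▸ hfin)
    refine Measure.eq_of_le_of_measure_univ_eq (Measure.le_iff.2 fun s hs => ?_) ?_
    · rw [withDensity_apply _ hs, withDensity_apply _ hs]
      exact lintegral_mono' (Measure.restrict_mono_measure hμν s) le_rfl
    · simpa only [withDensity_apply _ MeasurableSet.univ, Measure.restrict_univ] using heq
  have hrecover {ρ : Measure α} (hρ : ∫⁻ y, g y ∂ρ ≠ ⊤) :
      (ρ.withDensity g).withDensity g⁻¹ = ρ.restrict (Function.support g) := by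
    have hlt : ∀ᵐ y ∂ρ, g y ≠ ⊤ := (ae_lt_top hg hρ).mono fun y hy => hy.ne
    rw [← withDensity_mul₀ hg.aemeasurable hg.inv.aemeasurable,
      ← withDensity_indicator_one (measurableSet_support hg)]
    refine withDensity_congr_ae (hlt.mono fun y hy => ?_)
    by_cases h0 : g y = 0
    · simp [h0]
    · simp [h0, ENNReal.mul_inv_cancel h0 hy]
  rw [← hrecover (heq ▸ hfin), hdensity, hrecover hfin]

lemma eq_of_le_of_invariant (hμ : Kernel.Invariant P μ) (hν : Kernel.Invariant P ν) (hμν : μ ≤ ν)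
    (hC : MeasurableSet C) (heq : μ C = ν C) (hνC : ν C ≠ ⊤) (hacc : ∀ y, ∃ n, (P ^ n) y C ≠ 0) :
    μ = ν := by
  refine Measure.ext_of_iUnion_eq_univ (s := fun n => Function.support fun y => (P ^ n) y C)
    (eq_univ_of_forall fun y => mem_iUnion.2 (hacc y)) fun n => ?_
  refine restrict_support_eq_of_le hμν (Kernel.measurable_coe _ hC) ?_ ?_
  · simpa only [lintegral_pow_apply_of_invariant hμ n hC,
      lintegral_pow_apply_of_invariant hν n hC] using heq
  · rwa [lintegral_pow_apply_of_invariant hν n hC]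

lemma one_comp_measure (μ : Measure α) : (1 : Kernel α α) ∘ₘ μ = μ := Measure.id_comp

/-- Nummelin's splitting of the kernel `P`: from every point of the small set `C` the chain
regenerates with the sub-probability law `φ`, and `Q` is the part of `P` without regeneration. -/
structure IsSplitting (P Q : Kernel α α) (C : Set α) (φ : Measure α) : Prop where
  measurableSet : MeasurableSet C
  apply_eq : ∀ y, P y = Q y + C.indicator (fun _ => φ) y

lemma exists_isSplitting [IsFiniteMeasure φ] (hC : MeasurableSet C) (hφ : ∀ y ∈ C, φ ≤ P y) :
    ∃ Q, IsSplitting P Q C φ := by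
  let regen : α → Measure α := C.indicator fun _ => φ
  have hle (y : α) : regen y ≤ P y :=
    indicator_apply_le' (hφ y) fun _ => Measure.zero_le (P y)
  have hfin (y : α) : IsFiniteMeasure (regen y) :=
    isFiniteMeasure_of_le φ (indicator_apply_le' (fun _ => le_rfl) fun _ => Measure.zero_le φ)
  have hmeas : Measurable fun y => P y - regen y := by
    refine Measure.measurable_of_measurable_coe _ fun s hs => ?_
    simp only [Measure.sub_apply hs (hle _)]
    exact (Kernel.measurable_coe _ hs).sub
      ((Measure.measurable_coe hs).comp (measurable_const.indicator hC))
  exact ⟨⟨fun y => P y - regen y, hmeas⟩, hC, fun y => (Measure.sub_add_cancel_of_le (hle y)).symm⟩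

/-- The Green (potential) measure `∑ₙ φ Qⁿ`: when `Q` is the part of a chain without regeneration,
the expected occupation measure of a cycle started from `φ`. -/
noncomputable def greenMeasure (Q : Kernel α α) (φ : Measure α) : Measure α :=
  Measure.sum fun n => (Q ^ n : Kernel α α) ∘ₘ φ

lemma comp_pow_succ (Q : Kernel α α) (μ : Measure α) (n : ℕ) :
    (Q ^ (n + 1) : Kernel α α) ∘ₘ μ = Q ∘ₘ ((Q ^ n : Kernel α α) ∘ₘ μ) := by
  rw [Measure.comp_assoc, pow_succ']
  rfl

lemma comp_greenMeasure_add (Q : Kernel α α) (φ : Measure α) :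
    Q ∘ₘ greenMeasure Q φ + φ = greenMeasure Q φ := by
  ext s hs
  rw [greenMeasure, Measure.bind_sum _ Q (Kernel.aemeasurable Q), Measure.add_apply,
    Measure.sum_apply _ hs, Measure.sum_apply _ hs]
  simp only [← comp_pow_succ]
  rw [tsum_eq_zero_add' (f := fun n => ((Q ^ n : Kernel α α) ∘ₘ φ) s) ENNReal.summable,
    pow_zero, one_comp_measure, add_comm]

namespace IsSplitting

lemma comp_eq (h : IsSplitting P Q C φ) (μ : Measure α) : P ∘ₘ μ = Q ∘ₘ μ + μ C • φ := by
  ext s hs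
  have hind (y : α) : (C.indicator (fun _ => φ) y) s = C.indicator (fun _ => φ s) y := by
    by_cases hy : y ∈ C <;> simp [hy]
  rw [Measure.add_apply, Measure.bind_apply hs (Kernel.aemeasurable _),
    Measure.bind_apply hs (Kernel.aemeasurable _)]
  simp only [h.apply_eq, Measure.add_apply, hind]
  rw [lintegral_add_left (Kernel.measurable_coe _ hs), lintegral_indicator_const h.measurableSet,
    Measure.smul_apply, smul_eq_mul, mul_comm]

lemma comp_univ_add [IsMarkovKernel P] (h : IsSplitting P Q C φ) (μ : Measure α) :
    (Q ∘ₘ μ) univ + μ C * φ univ = μ univ := by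
  simpa using (congrArg (· univ) (h.comp_eq μ)).symm

lemma pow_comp_univ_add_sum [IsMarkovKernel P] (h : IsSplitting P Q C φ) (μ : Measure α) (n : ℕ) :
    ((Q ^ n : Kernel α α) ∘ₘ μ) univ
      + (∑ k ∈ Finset.range n, ((Q ^ k : Kernel α α) ∘ₘ μ) C) * φ univ = μ univ := by
  induction n with
  | zero => simp [one_comp_measure]
  | succ n ih => rw [Finset.sum_range_succ, add_mul, add_left_comm, comp_pow_succ, h.comp_univ_add,
      add_comm, ih]

lemma pow_apply_univ_le_one [IsMarkovKernel P] (h : IsSplitting P Q C φ) (n : ℕ) (y : α) :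
    (Q ^ n) y univ ≤ 1 := by
  have hsum := h.pow_comp_univ_add_sum (Measure.dirac y) n
  rw [Measure.dirac_bind (Kernel.measurable _), measure_univ (μ := Measure.dirac y)] at hsum
  exact le_self_add.trans_eq hsum

lemma greenMeasure_apply [IsMarkovKernel P] [IsFiniteMeasure φ] (h : IsSplitting P Q C φ)
    (hφ : φ ≠ 0) (hrec : ∀ y, Tendsto (fun n => (Q ^ n) y univ) atTop (𝓝 0)) :
    greenMeasure Q φ C = 1 := by
  have hmass : Tendsto (fun n => ((Q ^ n : Kernel α α) ∘ₘ φ) univ) atTop (𝓝 0) := by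
    simp only [Measure.bind_apply MeasurableSet.univ (Kernel.aemeasurable _)]
    rw [← lintegral_zero (μ := φ)]
    exact tendsto_lintegral_of_dominated_convergence (fun _ => 1)
      (fun n => Kernel.measurable_coe _ MeasurableSet.univ)
      (fun n => ae_of_all _ (h.pow_apply_univ_le_one n)) (by simp) (ae_of_all _ hrec)
  have hlim : Tendsto (fun n => ((Q ^ n : Kernel α α) ∘ₘ φ) univ
      + (∑ k ∈ Finset.range n, ((Q ^ k : Kernel α α) ∘ₘ φ) C) * φ univ) atTop
      (𝓝 (0 + (∑' k, ((Q ^ k : Kernel α α) ∘ₘ φ) C) * φ univ)) :=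
    hmass.add (ENNReal.Tendsto.mul_const ENNReal.summable.hasSum.tendsto_sum_nat
      (Or.inr (measure_ne_top φ univ)))
  simp only [h.pow_comp_univ_add_sum] at hlim
  have hfix := tendsto_nhds_unique hlim tendsto_const_nhds
  rw [zero_add] at hfix
  rw [greenMeasure, Measure.sum_apply _ h.measurableSet]
  exact (ENNReal.mul_eq_right (by simpa using hφ) (measure_ne_top φ univ)).1 hfix

lemma invariant_greenMeasure (h : IsSplitting P Q C φ) (hC : greenMeasure Q φ C = 1) :
    Kernel.Invariant P (greenMeasure Q φ) := by
  rw [Kernel.Invariant, h.comp_eq, hC, one_smul, comp_greenMeasure_add]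

lemma eq_pow_comp_add_sum (h : IsSplitting P Q C φ) (hν : Kernel.Invariant P ν) (n : ℕ) :
    ν = (Q ^ n : Kernel α α) ∘ₘ ν + ν C • ∑ k ∈ Finset.range n, (Q ^ k : Kernel α α) ∘ₘ φ := by
  induction n with
  | zero => simp [one_comp_measure]
  | succ n ih =>
    have hsplit : (Q ^ n : Kernel α α) ∘ₘ ν
        = (Q ^ (n + 1) : Kernel α α) ∘ₘ ν + ν C • (Q ^ n : Kernel α α) ∘ₘ φ := calc
      _ = (Q ^ n : Kernel α α) ∘ₘ (Q ∘ₘ ν + ν C • φ) := by rw [← h.comp_eq, hν.def]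
      _ = _ := by rw [Measure.comp_add, Measure.comp_smul, Measure.comp_assoc, pow_succ]; rfl
    rw [Finset.sum_range_succ, smul_add, add_comm (_ • _), ← add_assoc, ← hsplit]
    exact ih

lemma smul_greenMeasure_le (h : IsSplitting P Q C φ) (hν : Kernel.Invariant P ν) :
    ν C • greenMeasure Q φ ≤ ν := by
  refine Measure.le_iff.2 fun s hs => ?_
  rw [Measure.smul_apply, greenMeasure, Measure.sum_apply _ hs, ENNReal.tsum_eq_iSup_nat,
    smul_eq_mul, ENNReal.mul_iSup]
  refine iSup_le fun n => ?_
  calc ν C * ∑ k ∈ Finset.range n, ((Q ^ k : Kernel α α) ∘ₘ φ) s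
    _ = (ν C • ∑ k ∈ Finset.range n, (Q ^ k : Kernel α α) ∘ₘ φ) s := by simp
    _ ≤ ν s := ((Measure.le_add_left le_rfl).trans_eq (h.eq_pow_comp_add_sum hν n).symm : _ ≤ ν) s

end IsSplitting

lemma ne_top_of_smul_le [SigmaFinite ν] (hμ : μ ≠ 0) {c : ℝ≥0∞} (h : c • μ ≤ ν) : c ≠ ⊤ := by
  rintro rfl
  refine hμ (Measure.measure_univ_eq_zero.1 ?_)
  rw [← iUnion_spanningSets ν, measure_iUnion_null_iff]
  intro n
  have hlt : ⊤ * μ (spanningSets ν n) < ⊤ :=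
    (h (spanningSets ν n)).trans_lt (measure_spanningSets_lt_top ν n)
  exact by_contra fun h0 => hlt.ne (ENNReal.top_mul h0)

theorem IsSplitting.exists_invariant_forall_eq_smul [IsMarkovKernel P] [IsFiniteMeasure φ]
    (h : IsSplitting P Q C φ) (hφ : φ ≠ 0)
    (hrec : ∀ y, Tendsto (fun n => (Q ^ n) y univ) atTop (𝓝 0))
    (hacc : ∀ y, ∃ n, (P ^ n) y C ≠ 0) :
    ∃ ν : Measure α, SigmaFinite ν ∧ Kernel.Invariant P ν ∧ ν C = 1 ∧
      ∀ ν' : Measure α, SigmaFinite ν' → Kernel.Invariant P ν' → ν' C ≠ ⊤ ∧ ν' = ν' C • ν := by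
  have hC := h.greenMeasure_apply hφ hrec
  have hinv := h.invariant_greenMeasure hC
  refine ⟨greenMeasure Q φ, sigmaFinite_of_invariant hinv h.measurableSet (by simp [hC]) hacc,
    hinv, hC, fun ν' hσ hν' => ?_⟩
  have hle := h.smul_greenMeasure_le hν'
  have htop : ν' C ≠ ⊤ := ne_top_of_smul_le (fun h0 => by simp [h0] at hC) hle
  refine ⟨htop, (eq_of_le_of_invariant ?_ hν' hle h.measurableSet ?_ htop hacc).symm⟩
  · rw [Kernel.Invariant, Measure.comp_smul, hinv.def]
  · simp [hC]

end Splitting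

section Drift

open scoped Topology

variable {α : Type*} {mα : MeasurableSpace α} {P Q : Kernel α α} {C D : Set α} {φ : Measure α}
  {V : α → ℝ≥0∞}

/-- A Foster–Lyapunov drift condition: off `D` the kernel `P` lowers `V` on average, by an amount
bounded below on every sublevel set of `V`. -/
def HasStrictDrift (P : Kernel α α) (V : α → ℝ≥0∞) (D : Set α) : Prop :=
  ∀ A : ℝ≥0∞, A ≠ ⊤ → ∃ g > 0, ∀ y ∉ D, V y ≤ A → ∫⁻ x, V x ∂P y + g ≤ V y

lemma le_of_forall_pos_le_add_mul {a s v : ℝ≥0∞} (hv : v ≠ ⊤)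
    (h : ∀ η : NNReal, 0 < η → a ≤ s + η * v) : a ≤ s := by
  lift v to NNReal using hv
  refine ENNReal.le_of_forall_pos_le_add fun ε hε _ => (h (ε / (v + 1)) (by positivity)).trans ?_
  have hsmall : ε / (v + 1) * v ≤ ε := by
    rw [div_mul_eq_mul_div]
    exact div_le_of_le_mul₀ (by positivity) (by positivity) (by gcongr; exact le_self_add)
  gcongr
  exact_mod_cast hsmall

-- Maximum principle for `u - η V`: off `D` the drift keeps it strictly below its supremum, so the
-- supremum is bounded by `s`; then `η → 0`.
lemma HasStrictDrift.le_of_subharmonic [IsMarkovKernel P] (h : HasStrictDrift P V D)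
    (hV : Measurable V) (hVtop : ∀ y, V y ≠ ⊤) {u : α → ℝ≥0∞} (hu : u ≤ 1) {s : ℝ≥0∞}
    (hsub : ∀ y ∉ D, u y ≤ ∫⁻ x, u x ∂P y) (hs : ∀ y ∈ D, u y ≤ s) (y : α) : u y ≤ s := by
  refine le_of_forall_pos_le_add_mul (hVtop y) fun η hη => ?_
  let m := ⨆ x, (u x - η * V x)
  have hle (x : α) : u x ≤ m + η * V x := tsub_le_iff_right.1 (le_iSup (fun x => u x - η * V x) x)
  have hm1 : m ≤ 1 := iSup_le fun x => tsub_le_self.trans (hu x)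
  have hmtop : m ≠ ⊤ := ne_top_of_le_ne_top ENNReal.one_ne_top hm1
  obtain ⟨g, hg, hdrift⟩ := h (η : ℝ≥0∞)⁻¹ (ENNReal.inv_ne_top.2 (by simpa using hη.ne'))
  have hstep (x : α) (hx : x ∉ D) (hxη : V x ≤ (η : ℝ≥0∞)⁻¹) : u x - η * V x ≤ m - η * g := by
    have hsum : u x + η * g ≤ m + η * V x := calc
      u x + η * g ≤ ∫⁻ z, (m + η * V z) ∂P x + η * g := by
        gcongr; exact (hsub x hx).trans (lintegral_mono hle)
      _ = m + η * (∫⁻ z, V z ∂P x + g) := by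
        rw [lintegral_add_left measurable_const, lintegral_const_mul _ hV, lintegral_const,
          measure_univ, mul_one, add_assoc, mul_add]
      _ ≤ m + η * V x := by gcongr; exact hdrift x hx hxη
    refine tsub_le_iff_right.2 ((ENNReal.le_sub_of_add_le_right ?_ hsum).trans ?_)
    · exact ne_top_of_le_ne_top
        (ENNReal.add_ne_top.2 ⟨hmtop, ENNReal.mul_ne_top ENNReal.coe_ne_top (hVtop x)⟩)
        (le_add_self.trans hsum)
    · exact tsub_le_iff_right.2 (by rw [add_right_comm]; gcongr; exact le_tsub_add)
  have hmax : m ≤ max s (m - η * g) := iSup_le fun x => by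
    by_cases hx : x ∈ D
    · exact le_max_of_le_left (tsub_le_self.trans (hs x hx))
    · rcases le_total (V x) (η : ℝ≥0∞)⁻¹ with hxη | hxη
      · exact le_max_of_le_right (hstep x hx hxη)
      · have h1 : 1 ≤ η * V x :=
          (ENNReal.mul_inv_cancel (by simpa using hη.ne') ENNReal.coe_ne_top).ge.trans (by gcongr)
        simp [tsub_eq_zero_of_le ((hu x).trans h1)]
  have hms : m ≤ s := by
    by_contra! hlt
    refine (ENNReal.sub_lt_self hmtop (bot_lt_of_lt hlt).ne' ?_).not_ge
      ((le_max_iff.1 hmax).resolve_left hlt.not_ge)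
    exact mul_ne_zero (by simpa using hη.ne') hg.ne'
  exact (hle y).trans (by gcongr)

lemma isMarkovKernel_pow (P : Kernel α α) [IsMarkovKernel P] (n : ℕ) : IsMarkovKernel (P ^ n) := by
  induction n with
  | zero => exact inferInstanceAs (IsMarkovKernel Kernel.id)
  | succ n _ => exact pow_succ P n ▸ inferInstanceAs (IsMarkovKernel ((P ^ n : Kernel α α) ∘ₖ P))

lemma IsSplitting.pow_apply_le (h : IsSplitting P Q C φ) (n : ℕ) (y : α) :
    (Q ^ n) y ≤ (P ^ n) y := by
  induction n with
  | zero => rfl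
  | succ n ih =>
    refine Measure.le_iff.2 fun s hs => ?_
    rw [Kernel.pow_succ_apply_eq_lintegral _ _ _ hs, Kernel.pow_succ_apply_eq_lintegral _ _ _ hs]
    refine lintegral_mono' ih fun b => ?_
    exact ((Measure.le_add_right le_rfl).trans_eq (h.apply_eq b).symm : Q b ≤ P b) s

lemma IsSplitting.pow_succ_apply_univ_le [IsMarkovKernel P] (h : IsSplitting P Q C φ) (n : ℕ)
    (y : α) : (Q ^ (n + 1)) y univ + (P ^ n) y C * φ univ ≤ 1 := by
  have := isMarkovKernel_pow P n
  calc (Q ^ (n + 1)) y univ + (P ^ n) y C * φ univ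
    _ ≤ (Q ∘ₘ (P ^ n) y) univ + (P ^ n) y C * φ univ := by
      refine add_le_add ?_ le_rfl
      rw [Kernel.pow_succ_apply_eq_lintegral _ _ _ MeasurableSet.univ,
        Measure.bind_apply MeasurableSet.univ (Kernel.aemeasurable _)]
      exact lintegral_mono' (h.pow_apply_le n y) le_rfl
    _ = 1 := (h.comp_univ_add _).trans measure_univ

lemma IsSplitting.antitone_pow_apply_univ [IsMarkovKernel P] (h : IsSplitting P Q C φ) (y : α) :
    Antitone fun n => (Q ^ n) y univ := by
  refine antitone_nat_of_succ_le fun n => ?_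
  rw [Kernel.pow_succ_apply_eq_lintegral _ _ _ MeasurableSet.univ, ← lintegral_one]
  exact lintegral_mono fun b => by simpa only [pow_one] using h.pow_apply_univ_le_one 1 b

lemma IsSplitting.lintegral_iInf_pow_apply_univ [IsMarkovKernel P] (h : IsSplitting P Q C φ)
    (k : ℕ) (y : α) :
    ∫⁻ x, ⨅ n, (Q ^ n) x univ ∂(Q ^ k) y = ⨅ n, (Q ^ n) y univ := by
  rw [lintegral_iInf (fun n => Kernel.measurable_coe _ MeasurableSet.univ)
    (fun i j hij x => h.antitone_pow_apply_univ x hij)]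
  · simp only [← Kernel.pow_add_apply_eq_lintegral _ _ _ _ MeasurableSet.univ]
    exact tendsto_nhds_unique
      (tendsto_atTop_iInf fun i j hij => h.antitone_pow_apply_univ y (by lia))
      ((tendsto_atTop_iInf (h.antitone_pow_apply_univ y)).comp
        (tendsto_atTop_mono (fun i => Nat.le_add_left i k) tendsto_id))
  · refine ne_top_of_le_ne_top ENNReal.one_ne_top ?_
    rw [← Kernel.pow_add_apply_eq_lintegral _ _ _ _ MeasurableSet.univ]
    exact h.pow_apply_univ_le_one (k + 0) y

theorem IsSplitting.tendsto_pow_apply_univ_zero [IsMarkovKernel P] (h : IsSplitting P Q C φ)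
    (hφ : φ ≠ 0) (hdrift : HasStrictDrift P V D) (hV : Measurable V) (hVtop : ∀ y, V y ≠ ⊤)
    {n : ℕ} {p : ℝ≥0∞} (hp : p ≠ 0) (hD : ∀ y ∈ D, p ≤ (P ^ n) y C) (y : α) :
    Tendsto (fun k => (Q ^ k) y univ) atTop (𝓝 0) := by
  -- `u x` is the probability that the chain started at `x` never regenerates.
  let u : α → ℝ≥0∞ := fun x => ⨅ k, (Q ^ k) x univ
  let S : ℝ≥0∞ := ⨆ x, u x
  let q : ℝ≥0∞ := 1 - p * φ univ
  have hu1 : u ≤ 1 := fun x => iInf_le_of_le 0 (h.pow_apply_univ_le_one 0 x)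
  have hStop : S ≠ ⊤ := ne_top_of_le_ne_top ENNReal.one_ne_top (iSup_le hu1)
  have hsub (x : α) : u x ≤ ∫⁻ z, u z ∂P x := calc
    u x = ∫⁻ z, u z ∂Q x := by simpa only [pow_one] using (h.lintegral_iInf_pow_apply_univ 1 x).symm
    _ ≤ ∫⁻ z, u z ∂P x := lintegral_mono' (by simpa using h.pow_apply_le 1 x) le_rfl
  have hSq (x : α) (hx : x ∈ D) : u x ≤ S * q := calc
    u x = ∫⁻ z, u z ∂(Q ^ (n + 1)) x := (h.lintegral_iInf_pow_apply_univ (n + 1) x).symm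
    _ ≤ ∫⁻ _, S ∂(Q ^ (n + 1)) x := lintegral_mono fun z => le_iSup u z
    _ = S * (Q ^ (n + 1)) x univ := lintegral_const S
    _ ≤ S * q := by
      have hmass : (Q ^ (n + 1)) x univ + p * φ univ ≤ 1 :=
        (add_le_add_right (mul_le_mul_left (hD x hx) _) _).trans (h.pow_succ_apply_univ_le n x)
      gcongr
      exact ENNReal.le_sub_of_add_le_right
        (ne_top_of_le_ne_top ENNReal.one_ne_top (le_add_self.trans hmass)) hmass
  have hSle : S ≤ S * q :=
    iSup_le (hdrift.le_of_subharmonic hV hVtop hu1 (fun x _ => hsub x) hSq)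
  have hS : S = 0 := by
    by_contra h0
    have hq : q < 1 := ENNReal.sub_lt_self ENNReal.one_ne_top one_ne_zero
      (mul_ne_zero hp (by simpa using hφ))
    exact hSle.not_gt (by simpa using (ENNReal.mul_lt_mul_iff_right h0 hStop).2 hq)
  have huy : u y = 0 := nonpos_iff_eq_zero.1 (hS ▸ le_iSup u y)
  exact huy ▸ tendsto_atTop_iInf (h.antitone_pow_apply_univ y)

end Drift

section NoiseKernel

/-- The transition kernel of the chain `Yₙ₊₁ = zₙ₊₁ + h (Yₙ)` with independent noise `zₙ` of law
`μ`. As for `Kernel.map`, it is the zero kernel when `h` is not measurable. -/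
noncomputable def noiseKernel (μ : Measure ℝ) (h : ℝ → ℝ) : Kernel ℝ ℝ :=
  (Kernel.id ×ₖ Kernel.const ℝ μ).map fun p => p.2 + h p.1

variable {μ ν : Measure ℝ} {h : ℝ → ℝ}

lemma lintegral_noiseKernel [SFinite μ] (hh : Measurable h) {f : ℝ → ℝ≥0∞} (hf : Measurable f)
    (y : ℝ) : ∫⁻ x, f x ∂noiseKernel μ h y = ∫⁻ z, f (z + h y) ∂μ := by
  have hadd : Measurable fun p : ℝ × ℝ => p.2 + h p.1 := by fun_prop
  rw [noiseKernel, Kernel.lintegral_map _ hadd _ hf, Kernel.lintegral_id_prod (by fun_prop)]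
  rfl

lemma noiseKernel_apply [SFinite μ] (hh : Measurable h) (y : ℝ) {s : Set ℝ}
    (hs : MeasurableSet s) : noiseKernel μ h y s = μ {z | z + h y ∈ s} := by
  rw [← lintegral_indicator_one hs, lintegral_noiseKernel hh (measurable_one.indicator hs),
    ← lintegral_indicator_one (s := {z | z + h y ∈ s}) (measurable_add_const (h y) hs)]
  rfl

lemma isMarkovKernel_noiseKernel [IsProbabilityMeasure μ] (hh : Measurable h) :
    IsMarkovKernel (noiseKernel μ h) :=
  Kernel.IsMarkovKernel.map _ (by fun_prop)

lemma noiseKernel_comp_measure [SFinite μ] [SFinite ν] (hh : Measurable h) :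
    noiseKernel μ h ∘ₘ ν = (ν.prod μ).map fun p => p.2 + h p.1 := by
  have hadd : Measurable fun p : ℝ × ℝ => p.2 + h p.1 := by fun_prop
  refine Measure.ext_of_lintegral _ fun f hf => ?_
  rw [Measure.lintegral_bind (Kernel.aemeasurable _) hf.aemeasurable, lintegral_map hf hadd,
    lintegral_prod _ (by fun_prop)]
  simp only [lintegral_noiseKernel hh hf]

lemma measure_pow_le_noiseKernel_pow_Icc [SFinite μ] (hh : Monotone h) {a b l r y : ℝ}
    (hl : l ≤ h y) (hr : h y ≤ r) (n : ℕ) :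
    μ (Icc a b) ^ (n + 1) ≤ (noiseKernel μ h ^ (n + 1)) y
      (Icc ((fun x => a + h x)^[n] (a + l)) ((fun x => b + h x)^[n] (b + r))) := by
  have hstep {l r x : ℝ} (hl : l ≤ h x) (hr : h x ≤ r) :
      μ (Icc a b) ≤ noiseKernel μ h x (Icc (a + l) (b + r)) := by
    rw [noiseKernel_apply hh.measurable x measurableSet_Icc]
    exact measure_mono fun z hz => ⟨by linarith [hz.1], by linarith [hz.2]⟩
  induction n with
  | zero => simpa using hstep hl hr
  | succ n ih =>
    rw [Kernel.pow_succ_apply_eq_lintegral _ _ _ measurableSet_Icc, pow_succ, mul_comm]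
    simp only [Function.iterate_succ_apply']
    set s := Icc ((fun x => a + h x)^[n] (a + l)) ((fun x => b + h x)^[n] (b + r))
    calc μ (Icc a b) * μ (Icc a b) ^ (n + 1)
      _ ≤ ∫⁻ _ in s, μ (Icc a b) ∂(noiseKernel μ h ^ (n + 1)) y := by
        rw [setLIntegral_const]; gcongr
      _ ≤ ∫⁻ x in s, _ ∂(noiseKernel μ h ^ (n + 1)) y :=
        setLIntegral_mono' measurableSet_Icc fun _ hx => hstep (hh hx.1) (hh hx.2)
      _ ≤ _ := setLIntegral_le_lintegral _ _

section InfiniteMass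

variable {Ω : Type*} {mΩ : MeasurableSpace Ω} {ρ : Measure Ω} [IsFiniteMeasure ρ] {X Y g : Ω → ℝ}

lemma lintegral_ofReal_sub_add_eq_of_map_eq (hXm : Measurable X) (hYm : Measurable Y)
    (hmap : ρ.map X = ρ.map Y) {N : ℝ} (hXN : ∀ ω, |X ω| ≤ N) (hYN : ∀ ω, |Y ω| ≤ N)
    (hg0 : 0 ≤ g) (hXY : X ≤ Y + g) :
    ∫⁻ ω, ENNReal.ofReal (Y ω - X ω + g ω) ∂ρ = ∫⁻ ω, ENNReal.ofReal (g ω) ∂ρ := by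
  have hshift : Measurable fun x : ℝ => ENNReal.ofReal (x + N) := by fun_prop
  have hfin : ∫⁻ ω, ENNReal.ofReal (X ω + N) ∂ρ ≠ ⊤ := by
    refine ne_top_of_le_ne_top (b := ∫⁻ _, ENNReal.ofReal (N + N) ∂ρ) ?_ ?_
    · simpa using ENNReal.mul_ne_top ENNReal.ofReal_ne_top (measure_ne_top ρ univ)
    · exact lintegral_mono fun ω => ENNReal.ofReal_le_ofReal (by linarith [le_of_abs_le (hXN ω)])
  have hsplit (ω : Ω) : ENNReal.ofReal (Y ω - X ω + g ω) + ENNReal.ofReal (X ω + N)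
      = ENNReal.ofReal (g ω) + ENNReal.ofReal (Y ω + N) := by
    rw [← ENNReal.ofReal_add (by linarith [hXY ω, Pi.add_apply Y g ω])
        (by linarith [neg_le_of_abs_le (hXN ω)]),
      ← ENNReal.ofReal_add (hg0 ω) (by linarith [neg_le_of_abs_le (hYN ω)])]
    ring_nf
  refine (ENNReal.add_left_inj hfin).1 ?_
  rw [← lintegral_add_right _ (by fun_prop)]
  simp only [hsplit]
  rw [lintegral_add_right _ (by fun_prop), ← lintegral_map hshift hXm, hmap,
    lintegral_map hshift hYm]

lemma lintegral_ofReal_sub_add_le_of_map_eq (hXm : Measurable X) (hYm : Measurable Y)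
    (hg : Measurable g) (hmap : ρ.map X = ρ.map Y) (hg0 : 0 ≤ g) (hXY : X ≤ Y + g) :
    ∫⁻ ω, ENNReal.ofReal (Y ω - X ω + g ω) ∂ρ ≤ ∫⁻ ω, ENNReal.ofReal (g ω) ∂ρ := by
  let clamp : ℕ → ℝ → ℝ := fun n x => max (-n) (min x n)
  have hclamp (n : ℕ) : Measurable (clamp n) := by fun_prop
  have hclamp_abs (n : ℕ) (x : ℝ) : |clamp n x| ≤ n :=
    abs_le.2 ⟨le_max_left _ _, max_le (by linarith [n.cast_nonneg (α := ℝ)]) (min_le_right _ _)⟩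
  have hclamp_eq (x : ℝ) : ∀ᶠ n in atTop, clamp n x = x := by
    filter_upwards [eventually_ge_atTop ⌈|x|⌉₊] with n hn
    have hxn := abs_le.1 (Nat.ceil_le.1 hn)
    simp only [clamp, min_eq_left hxn.2, max_eq_right hxn.1]
  have hclamp_le (n : ℕ) (ω : Ω) : clamp n (X ω) ≤ clamp n (Y ω) + g ω := by
    have h1 := hXY ω
    have h2 := hg0 ω
    simp only [Pi.add_apply, Pi.zero_apply, clamp] at h1 h2 ⊢
    grind
  have htrunc (n : ℕ) : ∫⁻ ω, ENNReal.ofReal (clamp n (Y ω) - clamp n (X ω) + g ω) ∂ρ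
      = ∫⁻ ω, ENNReal.ofReal (g ω) ∂ρ := by
    refine lintegral_ofReal_sub_add_eq_of_map_eq (X := clamp n ∘ X) (Y := clamp n ∘ Y)
      (by fun_prop) (by fun_prop) ?_ (fun ω => hclamp_abs n _)
      (fun ω => hclamp_abs n _) hg0 (hclamp_le n)
    rw [← Measure.map_map (hclamp n) hXm, hmap, Measure.map_map (hclamp n) hYm]
  calc ∫⁻ ω, ENNReal.ofReal (Y ω - X ω + g ω) ∂ρ
    _ = ∫⁻ ω, liminf (fun n => ENNReal.ofReal (clamp n (Y ω) - clamp n (X ω) + g ω)) atTop ∂ρ := by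
      refine lintegral_congr fun ω => (Tendsto.liminf_eq (tendsto_const_nhds.congr' ?_)).symm
      filter_upwards [hclamp_eq (X ω), hclamp_eq (Y ω)] with n h1 h2
      rw [h1, h2]
    _ ≤ liminf (fun n => ∫⁻ ω, ENNReal.ofReal (clamp n (Y ω) - clamp n (X ω) + g ω) ∂ρ) atTop :=
      lintegral_liminf_le fun n => by fun_prop
    _ = ∫⁻ ω, ENNReal.ofReal (g ω) ∂ρ := by simp only [htrunc, liminf_const]

lemma lintegral_ofReal_add_abs (hμ : Integrable (fun z => z) μ) (hmean : ∫ z, z ∂μ = 0) :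
    ∫⁻ z, ENNReal.ofReal (z + |z|) ∂μ = ∫⁻ z, ENNReal.ofReal |z| ∂μ := by
  rw [← ofReal_integral_eq_lintegral_ofReal hμ.abs (ae_of_all _ abs_nonneg),
    ← ofReal_integral_eq_lintegral_ofReal (f := fun z => z + |z|) (hμ.add hμ.abs)
      (ae_of_all _ fun z => show 0 ≤ z + |z| by linarith [neg_abs_le z]),
    integral_add hμ hμ.abs, hmean, zero_add]

-- Along a finite invariant measure `Y` and `z + h Y` have the same law, so `z + (h Y - Y)` would
-- have mean zero although `E z = 0` and `h Y - Y > 0`; truncation replaces the missing moments.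
theorem measure_univ_eq_top_of_invariant_noiseKernel [IsProbabilityMeasure μ]
    (hμ : Integrable (fun z => z) μ) (hmean : ∫ z, z ∂μ = 0) (hh : Measurable h)
    (hlt : ∀ y, y < h y) (hν : Kernel.Invariant (noiseKernel μ h) ν) (hν0 : ν ≠ 0) :
    ν univ = ⊤ := by
  by_contra htop
  have : IsFiniteMeasure ν := ⟨lt_top_iff_ne_top.2 htop⟩
  have hlaw : (ν.prod μ).map Prod.fst = (ν.prod μ).map fun p => p.2 + h p.1 := by
    rw [← noiseKernel_comp_measure hh, hν.def, Measure.map_fst_prod, measure_univ, one_smul]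
  have hbound := lintegral_ofReal_sub_add_le_of_map_eq (g := fun p => |p.2|) measurable_fst
    (by fun_prop) (by fun_prop) hlaw (fun p => abs_nonneg _)
    (fun p => by simp only [Pi.add_apply]; linarith [neg_abs_le p.2, hlt p.1])
  have hinner (y : ℝ) : ∫⁻ z, ENNReal.ofReal (z + h y - y + |z|) ∂μ
      = ENNReal.ofReal (h y - y) + ∫⁻ z, ENNReal.ofReal |z| ∂μ := calc
    _ = ∫⁻ z, (ENNReal.ofReal (h y - y) + ENNReal.ofReal (z + |z|)) ∂μ :=
      lintegral_congr fun z => by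
        rw [← ENNReal.ofReal_add (sub_nonneg.2 (hlt y).le)
          (by linarith [neg_abs_le z])]
        ring_nf
    _ = _ := by
      rw [lintegral_add_left measurable_const, lintegral_const, measure_univ, mul_one,
        lintegral_ofReal_add_abs hμ hmean]
  rw [lintegral_prod _ (by fun_prop), lintegral_prod _ (by fun_prop)] at hbound
  simp only [hinner] at hbound
  rw [lintegral_add_right _ measurable_const] at hbound
  have hfin : ∫⁻ _, ∫⁻ z, ENNReal.ofReal |z| ∂μ ∂ν ≠ ⊤ := by
    rw [lintegral_const]
    exact ENNReal.mul_ne_top hμ.abs.lintegral_lt_top.ne htop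
  have hpos : 0 < ∫⁻ y, ENNReal.ofReal (h y - y) ∂ν := by
    have hsupp : Function.support (fun y => ENNReal.ofReal (h y - y)) = univ :=
      eq_univ_of_forall fun y => by simpa using hlt y
    rw [lintegral_pos_iff_support (by fun_prop), hsupp]
    exact Measure.measure_univ_pos.2 hν0
  exact hbound.not_gt (add_comm (∫⁻ _, _ ∂ν) _ ▸ ENNReal.lt_add_right hfin hpos.ne')

end InfiniteMass

end NoiseKernel

section LogarithmicDrift

open scoped Topology

/-- The Lyapunov function `log (1 + y⁺)`. A logarithm is used because its concavity yields a strict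
drift for noise of mean zero. -/
noncomputable def logLyapunov (y : ℝ) : ℝ := Real.log (1 + max y 0)

lemma logLyapunov_of_nonneg {y : ℝ} (hy : 0 ≤ y) : logLyapunov y = Real.log (1 + y) := by
  rw [logLyapunov, max_eq_left hy]

lemma logLyapunov_nonneg (y : ℝ) : 0 ≤ logLyapunov y :=
  Real.log_nonneg (le_add_of_nonneg_right (le_max_right y 0))

lemma measurable_logLyapunov : Measurable logLyapunov :=
  Real.measurable_log.comp (by fun_prop)

lemma logLyapunov_add_le (y : ℝ) {e : ℝ} (he : 0 ≤ e) :
    logLyapunov (y + e) ≤ logLyapunov y + e := by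
  have hpos : 0 < 1 + max y 0 := by positivity
  calc logLyapunov (y + e)
    _ ≤ Real.log ((1 + max y 0) * (1 + e)) := by
      refine Real.log_le_log (by positivity) ?_
      have hmax : max (y + e) 0 ≤ max y 0 + e :=
        max_le (by gcongr; exact le_max_left y 0) (by positivity)
      nlinarith [mul_nonneg (le_max_right y 0) he]
    _ = logLyapunov y + Real.log (1 + e) := Real.log_mul hpos.ne' (by positivity)
    _ ≤ logLyapunov y + e := by
      gcongr; linarith [Real.log_le_sub_one_of_pos (by positivity : 0 < 1 + e)]

lemma log_one_add_le_sub_sq {t : ℝ} (ht : -1 < t) :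
    Real.log (1 + t) ≤ t - (min t 0) ^ 2 / 2 := by
  have hpos : 0 < 1 + t := by linarith
  rcases le_total t 0 with h0 | h0
  · have hinv : 0 ≤ (1 + t)⁻¹ - 1 := sub_nonneg.2 ((one_le_inv₀ hpos).2 (by linarith))
    have hlog := Real.le_log_one_add_of_nonneg hinv
    rw [add_sub_cancel, Real.log_inv] at hlog
    have hquot : 2 * ((1 + t)⁻¹ - 1) / ((1 + t)⁻¹ - 1 + 2) = -(2 * t) / (2 + t) := by
      have hsub : (1 + t)⁻¹ - 1 = -t / (1 + t) := by field_simp; ring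
      have hadd : (1 + t)⁻¹ - 1 + 2 = (2 + t) / (1 + t) := by field_simp; ring
      rw [hadd, hsub, ← mul_div_assoc, div_div_div_cancel_right₀ hpos.ne', mul_neg]
    have hbound : 2 * t / (2 + t) ≤ t - t ^ 2 / 2 := by
      rw [div_le_iff₀ (by linarith)]
      nlinarith [mul_nonneg_of_nonpos_of_nonpos h0 h0, pow_nonneg (neg_nonneg.2 h0) 3]
    rw [min_eq_left h0]
    rw [hquot, neg_div] at hlog
    linarith
  · rw [min_eq_right h0]
    linarith [Real.log_le_sub_one_of_pos hpos]

lemma logLyapunov_add_le_of_one_le {y : ℝ} (hy : 1 ≤ y) (z : ℝ) :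
    logLyapunov (z + y) ≤ logLyapunov y + z / (1 + y)
      + (5 / 2 * (Iio (-y)).indicator (· ^ 2) z - (min z 0) ^ 2 / 2) / (1 + y) ^ 2 := by
  have hy1 : 0 < 1 + y := by linarith
  obtain ⟨t, rfl⟩ : ∃ t, z = t * (1 + y) := ⟨z / (1 + y), by field_simp⟩
  have hmin : min (t * (1 + y)) 0 = min t 0 * (1 + y) := by
    rw [min_mul_of_nonneg _ _ hy1.le, zero_mul]
  rw [logLyapunov_of_nonneg (by linarith : 0 ≤ y), hmin, mul_pow, mul_div_cancel_right₀ _ hy1.ne']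
  rcases lt_or_ge (t * (1 + y)) (-y) with hz | hz
  · have ht : t ≤ -1 / 2 := by nlinarith
    have hzero : logLyapunov (t * (1 + y) + y) = 0 := by
      rw [logLyapunov, max_eq_right (by linarith), add_zero, Real.log_one]
    have hcancel : (5 / 2 * (t * (1 + y)) ^ 2 - min t 0 ^ 2 * (1 + y) ^ 2 / 2) / (1 + y) ^ 2
        = 2 * t ^ 2 := by
      rw [min_eq_left (by linarith)]
      field_simp
      ring
    rw [hzero, indicator_of_mem (mem_Iio.2 hz), hcancel]
    nlinarith [Real.log_nonneg (by linarith : 1 ≤ 1 + y)]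
  · have ht : -1 < t := by nlinarith
    have hlog : logLyapunov (t * (1 + y) + y) = Real.log (1 + y) + Real.log (1 + t) := by
      rw [logLyapunov_of_nonneg (by linarith), ← Real.log_mul hy1.ne' (by linarith)]
      ring_nf
    have hcancel : (5 / 2 * 0 - min t 0 ^ 2 * (1 + y) ^ 2 / 2) / (1 + y) ^ 2
        = -(min t 0 ^ 2 / 2) := by
      field_simp
      ring
    rw [hlog, indicator_of_notMem (notMem_Iio.2 hz), hcancel]
    linarith [log_one_add_le_sub_sq ht]

/-- The net second-order gain of the logarithm at height `y`: half the second moment of the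
negative part of the noise, minus the loss from jumps below `-y`, where `logLyapunov` vanishes. -/
noncomputable def driftGain (μ : Measure ℝ) (y : ℝ) : ℝ :=
  ∫ z, ((min z 0) ^ 2 / 2 - 5 / 2 * (Iio (-y)).indicator (· ^ 2) z) ∂μ

variable {μ : Measure ℝ}

lemma integrable_min_zero_sq (hsq : Integrable (fun z => z ^ 2) μ) :
    Integrable (fun z => (min z 0) ^ 2) μ := by
  refine hsq.mono' (by fun_prop) (ae_of_all _ fun z => ?_)
  rw [Real.norm_of_nonneg (sq_nonneg _), sq_le_sq]
  rcases min_choice z 0 with h | h <;> simp [h]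

lemma integrable_driftGain (hsq : Integrable (fun z => z ^ 2) μ) (y : ℝ) :
    Integrable (fun z => (min z 0) ^ 2 / 2 - 5 / 2 * (Iio (-y)).indicator (· ^ 2) z) μ :=
  ((integrable_min_zero_sq hsq).div_const 2).sub ((hsq.indicator measurableSet_Iio).const_mul _)

lemma tendsto_driftGain (hsq : Integrable (fun z => z ^ 2) μ) :
    Tendsto (driftGain μ) atTop (𝓝 (∫ z, (min z 0) ^ 2 / 2 ∂μ)) := by
  refine tendsto_integral_filter_of_dominated_convergence
    (fun z => (min z 0) ^ 2 / 2 + 5 / 2 * z ^ 2)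
    (Eventually.of_forall fun y => (integrable_driftGain hsq y).aestronglyMeasurable)
    (Eventually.of_forall fun y => ae_of_all _ fun z => ?_)
    (((integrable_min_zero_sq hsq).div_const 2).add (hsq.const_mul _)) (ae_of_all _ fun z => ?_)
  · refine (norm_sub_le _ _).trans (add_le_add (Real.norm_of_nonneg (by positivity)).le ?_)
    rw [norm_mul, Real.norm_of_nonneg (by norm_num : (0 : ℝ) ≤ 5 / 2)]
    gcongr
    exact (norm_indicator_le_norm_self _ z).trans (Real.norm_of_nonneg (sq_nonneg z)).le
  · refine tendsto_const_nhds.congr' ?_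
    filter_upwards [eventually_ge_atTop (-z)] with y hy
    rw [indicator_of_notMem (notMem_Iio.2 (neg_le.1 hy)), mul_zero, sub_zero]

lemma integral_min_zero_sq_pos (hsq : Integrable (fun z => z ^ 2) μ) (hneg : μ (Iio 0) ≠ 0) :
    0 < ∫ z, (min z 0) ^ 2 / 2 ∂μ := by
  rw [integral_pos_iff_support_of_nonneg (fun z => by positivity)
    ((integrable_min_zero_sq hsq).div_const 2)]
  refine (pos_iff_ne_zero.2 hneg).trans_le (measure_mono fun z hz => ?_)
  simpa [min_eq_left (mem_Iio.1 hz).le] using (mem_Iio.1 hz).ne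

lemma lintegral_logLyapunov_add_le [IsProbabilityMeasure μ] (hμ : Integrable (fun z => z) μ)
    (hmean : ∫ z, z ∂μ = 0) (hsq : Integrable (fun z => z ^ 2) μ) {y x g : ℝ} (hy : 1 ≤ y)
    (hx : y ≤ x) (hg0 : 0 ≤ g) (hg : x - y + g ≤ driftGain μ y / (1 + y) ^ 2) :
    ∫⁻ z, ENNReal.ofReal (logLyapunov (z + x)) ∂μ + ENNReal.ofReal g
      ≤ ENNReal.ofReal (logLyapunov y) := by
  let gain : ℝ → ℝ := fun z => (min z 0) ^ 2 / 2 - 5 / 2 * (Iio (-y)).indicator (· ^ 2) z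
  let G : ℝ → ℝ := fun z => (logLyapunov y + (x - y) + g) + (z / (1 + y) - gain z / (1 + y) ^ 2)
  have hVG (z : ℝ) : logLyapunov (z + x) + g ≤ G z := by
    have hshift := logLyapunov_add_le (z + y) (sub_nonneg.2 hx)
    have hcurv := logLyapunov_add_le_of_one_le hy z
    rw [add_add_sub_cancel] at hshift
    rw [← neg_sub, neg_div] at hcurv
    simp only [G, gain]
    linarith
  have hGint : Integrable (fun z => z / (1 + y) - gain z / (1 + y) ^ 2) μ :=
    (hμ.div_const _).sub ((integrable_driftGain hsq y).div_const _)
  have hG : ∫ z, G z ∂μ ≤ logLyapunov y := by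
    have hint : ∫ z, (z / (1 + y) - gain z / (1 + y) ^ 2) ∂μ = -(driftGain μ y / (1 + y) ^ 2) := by
      rw [integral_sub (hμ.div_const _) ((integrable_driftGain hsq y).div_const _), integral_div,
        integral_div, hmean, zero_div, zero_sub]
      rfl
    rw [integral_add (integrable_const _) hGint, hint, integral_const, probReal_univ, one_smul]
    linarith
  calc ∫⁻ z, ENNReal.ofReal (logLyapunov (z + x)) ∂μ + ENNReal.ofReal g
    _ = ∫⁻ z, ENNReal.ofReal (logLyapunov (z + x) + g) ∂μ := by
      simp only [ENNReal.ofReal_add (logLyapunov_nonneg _) hg0]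
      rw [lintegral_add_right _ measurable_const, lintegral_const, measure_univ, mul_one]
    _ ≤ ∫⁻ z, ENNReal.ofReal (G z) ∂μ := lintegral_mono fun z => ENNReal.ofReal_le_ofReal (hVG z)
    _ = ENNReal.ofReal (∫ z, G z ∂μ) :=
      (ofReal_integral_eq_lintegral_ofReal ((integrable_const _).add hGint)
        (ae_of_all _ fun z => (add_nonneg (logLyapunov_nonneg _) hg0).trans (hVG z))).symm
    _ ≤ ENNReal.ofReal (logLyapunov y) := ENNReal.ofReal_le_ofReal hG

theorem hasStrictDrift_noiseKernel [IsProbabilityMeasure μ] (hμ : Integrable (fun z => z) μ)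
    (hmean : ∫ z, z ∂μ = 0) (hsq : Integrable (fun z => z ^ 2) μ) (hneg : μ (Iio 0) ≠ 0)
    {h : ℝ → ℝ} (hh : Measurable h) (hle : ∀ y, y ≤ h y)
    (hlim : Tendsto (fun y => (h y - y) * (1 + y) ^ 2) atTop (𝓝 0)) :
    ∃ K, HasStrictDrift (noiseKernel μ h) (fun y => ENNReal.ofReal (logLyapunov y)) (Iic K) := by
  have hσ := integral_min_zero_sq_pos hsq hneg
  set σ := ∫ z, (min z 0) ^ 2 / 2 ∂μ
  have hgain : ∀ᶠ y in atTop, σ / 2 < driftGain μ y - (h y - y) * (1 + y) ^ 2 :=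
    ((tendsto_driftGain hsq).sub hlim).eventually_const_lt (by linarith)
  obtain ⟨K, hK⟩ := eventually_atTop.1 (hgain.and (eventually_ge_atTop 1))
  refine ⟨K, fun A hA => ⟨ENNReal.ofReal (σ / 2 / Real.exp A.toReal ^ 2),
    ENNReal.ofReal_pos.2 (by positivity), fun y hy hyA => ?_⟩⟩
  obtain ⟨hgy, hy1⟩ := hK y (not_le.1 hy).le
  have hy0 : 0 < 1 + y := by linarith
  have hexp : 1 + y ≤ Real.exp A.toReal := by
    rw [← Real.log_le_iff_le_exp hy0, ← logLyapunov_of_nonneg (by linarith)]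
    exact (ENNReal.ofReal_le_iff_le_toReal hA).1 hyA
  rw [lintegral_noiseKernel hh measurable_logLyapunov.ennreal_ofReal]
  refine lintegral_logLyapunov_add_le hμ hmean hsq hy1 (hle y) (by positivity) ?_
  calc h y - y + σ / 2 / Real.exp A.toReal ^ 2
    _ ≤ h y - y + σ / 2 / (1 + y) ^ 2 := by gcongr
    _ = ((h y - y) * (1 + y) ^ 2 + σ / 2) / (1 + y) ^ 2 := by field_simp
    _ ≤ driftGain μ y / (1 + y) ^ 2 := by gcongr; linarith

end LogarithmicDrift

section Softplus

open scoped Topology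

lemma hY_eq_log_one_add_exp (y : ℝ) : hY y = Real.log (1 + Real.exp y) := by
  have hfactor : 1 + Real.exp y = Real.exp y * (1 + Real.exp (-y)) := by
    rw [mul_add, ← Real.exp_add, add_neg_cancel, Real.exp_zero, mul_one, add_comm]
  rw [hfactor, Real.log_mul (Real.exp_ne_zero y) (by positivity), Real.log_exp, hY]

lemma exp_hY (y : ℝ) : Real.exp (hY y) = 1 + Real.exp y := by
  rw [hY_eq_log_one_add_exp, Real.exp_log (by positivity)]

lemma lt_hY (y : ℝ) : y < hY y :=
  lt_add_of_pos_right y (Real.log_pos (lt_add_of_pos_right 1 (Real.exp_pos (-y))))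

lemma hY_pos (y : ℝ) : 0 < hY y := by
  rw [← Real.one_lt_exp_iff, exp_hY]
  exact lt_add_of_pos_right 1 (Real.exp_pos y)

lemma hY_sub_self_le (y : ℝ) : hY y - y ≤ Real.exp (-y) := by
  have := Real.log_le_sub_one_of_pos (by positivity : 0 < 1 + Real.exp (-y))
  simp only [hY]
  linarith

lemma continuous_hY : Continuous hY :=
  continuous_id.add (Continuous.log (by fun_prop) fun y => by positivity)

lemma monotone_hY : Monotone hY := fun x y hxy => by
  rw [← Real.exp_le_exp, exp_hY, exp_hY]
  gcongr

lemma tendsto_hY_sub_self_mul_sq :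
    Tendsto (fun y => (hY y - y) * (1 + y) ^ 2) atTop (𝓝 0) := by
  have hexp : Tendsto (fun y : ℝ => Real.exp (-y) * (1 + y) ^ 2) atTop (𝓝 0) := by
    have hpow := ((Real.tendsto_pow_mul_exp_neg_atTop_nhds_zero 2).comp
      (tendsto_atTop_add_const_left atTop 1 tendsto_id)).mul_const (Real.exp 1)
    rw [zero_mul] at hpow
    refine hpow.congr fun y => ?_
    simp only [Function.comp_apply, id_eq, mul_assoc, ← Real.exp_add]
    ring_nf
  exact squeeze_zero (fun y => mul_nonneg (sub_nonneg.2 (lt_hY y).le) (sq_nonneg _))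
    (fun y => mul_le_mul_of_nonneg_right (hY_sub_self_le y) (sq_nonneg _)) hexp

/-- The fixed point of `x ↦ b + hY x`, for `b < 0`. -/
noncomputable def hYFixedPoint (b : ℝ) : ℝ := Real.log (Real.exp b / (1 - Real.exp b))

lemma exp_hYFixedPoint {b : ℝ} (hb : b < 0) :
    Real.exp (hYFixedPoint b) = Real.exp b / (1 - Real.exp b) :=
  Real.exp_log (div_pos (Real.exp_pos b) (sub_pos.2 (Real.exp_lt_one_iff.2 hb)))

lemma add_hY_hYFixedPoint {b : ℝ} (hb : b < 0) : b + hY (hYFixedPoint b) = hYFixedPoint b := by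
  have hne : 1 - Real.exp b ≠ 0 := (sub_pos.2 (Real.exp_lt_one_iff.2 hb)).ne'
  rw [← Real.exp_eq_exp, Real.exp_add, exp_hY, exp_hYFixedPoint hb]
  field_simp
  ring

lemma continuousAt_hYFixedPoint {b : ℝ} (hb : b < 0) : ContinuousAt hYFixedPoint b := by
  have hpos : 0 < 1 - Real.exp b := sub_pos.2 (Real.exp_lt_one_iff.2 hb)
  refine ContinuousAt.log (ContinuousAt.div (by fun_prop) (by fun_prop) hpos.ne') ?_
  exact (div_pos (Real.exp_pos b) hpos).ne'

-- In the coordinate `exp x` the map `x ↦ b + hY x` is affine with slope `exp b < 1`.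
lemma tendsto_iterate_add_hY {b : ℝ} (hb : b < 0) (x : ℝ) :
    Tendsto (fun n => (fun w => b + hY w)^[n] x) atTop (𝓝 (hYFixedPoint b)) := by
  set q := Real.exp (hYFixedPoint b) with hq
  have hfix : Real.exp b * (1 + q) = q := by
    rw [hq, ← exp_hY, ← Real.exp_add, add_hY_hYFixedPoint hb]
  have hexp (n : ℕ) : Real.exp ((fun w => b + hY w)^[n] x)
      = Real.exp b ^ n * (Real.exp x - q) + q := by
    induction n with
    | zero => simp
    | succ n ih =>
      rw [Function.iterate_succ_apply', Real.exp_add, exp_hY, ih]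
      linear_combination hfix
  have hpow : Tendsto (fun n : ℕ => Real.exp b ^ n * (Real.exp x - q) + q) atTop (𝓝 q) := by
    simpa using ((tendsto_pow_atTop_nhds_zero_of_lt_one (Real.exp_pos b).le
      (Real.exp_lt_one_iff.2 hb)).mul_const (Real.exp x - q)).add_const q
  simp only [← hexp] at hpow
  simpa only [Real.log_exp, hq] using hpow.log (Real.exp_pos _).ne'

lemma exists_measure_pow_le_hY_pow {μ : Measure ℝ} [SFinite μ] {z₀ r : ℝ} (hz₀ : z₀ < 0)
    (hr : 0 < r) : ∃ U ∈ 𝓝 z₀, ∀ x, ∃ n, ∀ y ≤ x,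
      μ U ^ n ≤ (noiseKernel μ hY ^ n) y (Icc (hYFixedPoint z₀ - r) (hYFixedPoint z₀ + r)) := by
  obtain ⟨ε, hε, hball⟩ := Metric.nhds_basis_closedBall.mem_iff.1
    (inter_mem (Iio_mem_nhds hz₀)
      (continuousAt_hYFixedPoint hz₀ (Ioo_mem_nhds (sub_lt_self _ hr) (lt_add_of_pos_right _ hr))))
  rw [Real.closedBall_eq_Icc] at hball
  have hlow := hball (left_mem_Icc.2 (by linarith))
  have hhigh := hball (right_mem_Icc.2 (by linarith))
  refine ⟨Icc (z₀ - ε) (z₀ + ε), Icc_mem_nhds (by linarith) (by linarith), fun x => ?_⟩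
  have hl := (tendsto_iterate_add_hY hlow.1 (z₀ - ε + 0)).eventually_const_lt hlow.2.1
  have hr := (tendsto_iterate_add_hY hhigh.1 (z₀ + ε + hY x)).eventually_lt_const hhigh.2.2
  obtain ⟨n, hnl, hnr⟩ := (hl.and hr).exists
  refine ⟨n + 1, fun y hy => ?_⟩
  exact (measure_pow_le_noiseKernel_pow_Icc monotone_hY (hY_pos y).le (monotone_hY hy) n).trans
    (measure_mono (Icc_subset_Icc hnl.le hnr.le))

end Softplus

section NoiseLaw

open scoped Topology

/-- The law of the increments of the chain: the measure with Lebesgue density `ζ`. -/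
noncomputable def noiseLaw (ζ : ℝ → ℝ) : Measure ℝ :=
  volume.withDensity fun x => ENNReal.ofReal (ζ x)

variable {ζ : ℝ → ℝ}

instance sFinite_noiseLaw : SFinite (noiseLaw ζ) := by
  unfold noiseLaw
  infer_instance

lemma lintegral_noiseLaw (hζ : Measurable ζ) {f : ℝ → ℝ≥0∞} (hf : Measurable f) :
    ∫⁻ x, f x ∂noiseLaw ζ = ∫⁻ x, f x * ENNReal.ofReal (ζ x) := by
  rw [noiseLaw, lintegral_withDensity_eq_lintegral_mul _ hζ.ennreal_ofReal hf]
  simp only [Pi.mul_apply, mul_comm]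

lemma integrable_noiseLaw_iff (hζ : Measurable ζ) (hζnn : ∀ x, 0 ≤ ζ x) {f : ℝ → ℝ} :
    Integrable f (noiseLaw ζ) ↔ Integrable fun x => f x * ζ x := by
  rw [noiseLaw, integrable_withDensity_iff hζ.ennreal_ofReal (ae_of_all _ fun _ => by simp)]
  simp only [ENNReal.toReal_ofReal (hζnn _)]

lemma integral_noiseLaw (hζ : Measurable ζ) (hζnn : ∀ x, 0 ≤ ζ x) (f : ℝ → ℝ) :
    ∫ x, f x ∂noiseLaw ζ = ∫ x, f x * ζ x := by
  rw [noiseLaw, integral_withDensity_eq_integral_toReal_smul hζ.ennreal_ofReal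
    (ae_of_all _ fun _ => ENNReal.ofReal_lt_top)]
  simp only [ENNReal.toReal_ofReal (hζnn _), smul_eq_mul, mul_comm]

lemma noiseLaw_apply_eq_ofReal_setIntegral (hint : Integrable ζ) (hζnn : ∀ x, 0 ≤ ζ x)
    {s : Set ℝ} (hs : MeasurableSet s) : noiseLaw ζ s = ENNReal.ofReal (∫ x in s, ζ x) := by
  rw [noiseLaw, withDensity_apply _ hs,
    ofReal_integral_eq_lintegral_ofReal hint.integrableOn (ae_of_all _ hζnn)]

lemma isProbabilityMeasure_noiseLaw (hζnn : ∀ x, 0 ≤ ζ x) (hζprob : ∫ x, ζ x = 1) :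
    IsProbabilityMeasure (noiseLaw ζ) := by
  have hint : Integrable ζ := integrable_of_integral_eq_one hζprob
  refine ⟨?_⟩
  rw [noiseLaw_apply_eq_ofReal_setIntegral hint hζnn MeasurableSet.univ, setIntegral_univ, hζprob,
    ENNReal.ofReal_one]

lemma noiseLaw_ne_zero_of_mem_nhds (hζ : LowerSemicontinuous ζ) {z : ℝ} (hz : 0 < ζ z)
    {U : Set ℝ} (hU : U ∈ 𝓝 z) : noiseLaw ζ U ≠ 0 := by
  obtain ⟨W, hWpos, hWopen, hzW⟩ := mem_nhds_iff.1 (inter_mem hU (hζ z 0 hz))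
  intro hzero
  have hW : noiseLaw ζ W = 0 := measure_mono_null (hWpos.trans inter_subset_left) hzero
  rw [noiseLaw, withDensity_apply_eq_zero hζ.measurable.ennreal_ofReal] at hW
  refine (hWopen.measure_pos volume ⟨z, hzW⟩).ne' (measure_mono_null (fun x hx => ?_) hW)
  exact ⟨(ENNReal.ofReal_pos.2 (hWpos hx).2).ne', hx⟩

lemma isInvariantY_iff_invariant_noiseKernel (hζ : Measurable ζ) {ν : Measure ℝ} :
    IsInvariantY ζ ν ↔ Kernel.Invariant (noiseKernel (noiseLaw ζ) hY) ν := by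
  have hstep {g : ℝ → ℝ≥0∞} (hg : Measurable g) :
      ∫⁻ z, g z ∂(ν.bind (noiseKernel (noiseLaw ζ) hY))
        = ∫⁻ y, ∫⁻ z, g (z + hY y) * ENNReal.ofReal (ζ z) ∂volume ∂ν := by
    rw [Measure.lintegral_bind (Kernel.aemeasurable _) hg.aemeasurable]
    refine lintegral_congr fun y => ?_
    rw [lintegral_noiseKernel continuous_hY.measurable hg]
    exact lintegral_noiseLaw hζ (hg.comp (measurable_add_const (hY y)))
  refine ⟨fun h => Measure.ext_of_lintegral _ fun g hg => ?_, fun h g hg => ?_⟩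
  · rw [hstep hg, h g hg]
  · rw [← hstep hg, h.def]

lemma exists_le_noiseKernel_of_mem_Icc (hζ : LowerSemicontinuous ζ) {h : ℝ → ℝ}
    (hh : Continuous h) {y₀ κ : ℝ} (hκ : κ < ζ (y₀ - h y₀)) :
    ∃ r > 0, ∀ y ∈ Icc (y₀ - r) (y₀ + r),
      ENNReal.ofReal κ • volume.restrict (Icc (y₀ - r) (y₀ + r))
        ≤ noiseKernel (noiseLaw ζ) h y := by
  have hopen : IsOpen {p : ℝ × ℝ | κ < ζ (p.2 - h p.1)} :=
    (hζ.isOpen_preimage κ).preimage (continuous_snd.sub (hh.comp continuous_fst))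
  have hnhds : {p : ℝ × ℝ | κ < ζ (p.2 - h p.1)} ∈ 𝓝 (y₀, y₀) := hopen.mem_nhds hκ
  obtain ⟨r, hr, hball⟩ := Metric.nhds_basis_closedBall.mem_iff.1 hnhds
  rw [← closedBall_prod_same, Real.closedBall_eq_Icc] at hball
  refine ⟨r, hr, fun y hy => Measure.le_iff.2 fun s hs => ?_⟩
  set C := Icc (y₀ - r) (y₀ + r)
  calc (ENNReal.ofReal κ • volume.restrict C) s
      = ∫⁻ x, (s ∩ C).indicator (fun _ => ENNReal.ofReal κ) x := by
        rw [lintegral_indicator_const (hs.inter measurableSet_Icc), Measure.smul_apply,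
          smul_eq_mul, Measure.restrict_apply hs]
    _ ≤ ∫⁻ x, s.indicator 1 x * ENNReal.ofReal (ζ (x - h y)) := by
        refine lintegral_mono (indicator_le fun x hx => ?_)
        rw [indicator_of_mem hx.1, Pi.one_apply, one_mul]
        exact ENNReal.ofReal_le_ofReal (le_of_lt (hball (mk_mem_prod hy hx.2)))
    _ = ∫⁻ z, s.indicator 1 (z + h y) * ENNReal.ofReal (ζ z) := by
        rw [← lintegral_add_right_eq_self _ (h y)]
        simp only [add_sub_cancel_right]
    _ = noiseKernel (noiseLaw ζ) h y s := by
        rw [← lintegral_indicator_one hs, lintegral_noiseKernel hh.measurable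
          (measurable_one.indicator hs)]
        exact (lintegral_noiseLaw hζ.measurable
          ((measurable_one.indicator hs).comp (measurable_add_const (h y)))).symm

lemma exists_isFiniteMeasure_le_noiseKernel (hζ : LowerSemicontinuous ζ) {h : ℝ → ℝ}
    (hh : Continuous h) {y₀ : ℝ} (hpos : 0 < ζ (y₀ - h y₀)) :
    ∃ r > 0, ∃ φ : Measure ℝ, IsFiniteMeasure φ ∧ φ ≠ 0 ∧
      ∀ y ∈ Icc (y₀ - r) (y₀ + r), φ ≤ noiseKernel (noiseLaw ζ) h y := by
  obtain ⟨r, hr, hle⟩ := exists_le_noiseKernel_of_mem_Icc hζ hh (half_lt_self hpos)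
  refine ⟨r, hr, _, Measure.smul_finite _ ENNReal.ofReal_ne_top, ?_, hle⟩
  rw [← Measure.measure_univ_ne_zero, Measure.smul_apply, smul_eq_mul,
    Measure.restrict_apply_univ, Real.volume_Icc]
  exact mul_ne_zero (ENNReal.ofReal_pos.2 (half_pos hpos)).ne'
    (ENNReal.ofReal_pos.2 (by linarith)).ne'

lemma integrable_mul_of_integrable_sq_mul (hint : Integrable ζ)
    (hsq : Integrable fun x => x ^ 2 * ζ x) : Integrable fun x => x * ζ x := by
  refine (hint.norm.add hsq.norm).mono' (by fun_prop) (ae_of_all _ fun x => ?_)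
  simp only [Pi.add_apply, norm_mul, norm_pow, Real.norm_eq_abs]
  nlinarith [abs_nonneg (ζ x), sq_nonneg (|x| - 1), mul_nonneg (abs_nonneg (ζ x)) (sq_nonneg |x|),
    mul_nonneg (abs_nonneg (ζ x)) (sq_nonneg (|x| - 1))]

lemma exists_neg_density_pos (hζnn : ∀ x, 0 ≤ ζ x) (hζ : ∫ x, ζ x ≠ 0)
    (hfirst : Integrable fun x => x * ζ x) (hmean : ∫ x, x * ζ x = 0) : ∃ z < 0, 0 < ζ z := by
  by_contra! hneg
  have hnonneg : 0 ≤ fun x => x * ζ x := fun x =>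
    (lt_or_ge x 0).elim (fun hx => mul_nonneg_of_nonpos_of_nonpos hx.le (hneg x hx))
      fun hx => mul_nonneg hx (hζnn x)
  have hzero : ζ =ᵐ[volume] 0 := by
    filter_upwards [(integral_eq_zero_iff_of_nonneg hnonneg hfirst).1 hmean,
      Measure.ae_ne volume 0] with x hx hx0
    exact (mul_eq_zero.1 hx).resolve_left hx0
  exact hζ ((integral_congr_ae hzero).trans (integral_zero' ℝ ℝ))

end NoiseLaw

section Tail

open scoped Topology

lemma integrable_pow_of_measure_lt_abs_le_exp {μ : Measure ℝ} {δ c : ℝ} (hδ : 0 < δ)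
    (htail : ∀ t, 0 < t → μ {x | t < |x|} ≤ ENNReal.ofReal (c * Real.exp (-δ * t)))
    {n : ℕ} (hn : n ≠ 0) : Integrable (fun x => x ^ n) μ := by
  have hn' : (0 : ℝ) < n := Nat.cast_pos.2 (Nat.pos_of_ne_zero hn)
  have hnorm : ∫⁻ x, ‖x ^ n‖ₑ ∂μ = ∫⁻ x, ENNReal.ofReal (|x| ^ (n : ℝ)) ∂μ := by
    simp only [Real.enorm_eq_ofReal_abs, abs_pow, Real.rpow_natCast]
  have hgamma := (integrableOn_rpow_mul_exp_neg_mul_rpow (p := 1) (s := n - 1) (b := δ)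
    (by linarith) one_pos hδ).const_mul c
  refine ⟨by fun_prop, ?_⟩
  rw [HasFiniteIntegral, hnorm, lintegral_rpow_eq_lintegral_meas_lt_mul μ
    (ae_of_all _ abs_nonneg) measurable_id.abs.aemeasurable hn']
  refine ENNReal.mul_lt_top ENNReal.ofReal_lt_top (lt_of_le_of_lt ?_ hgamma.lintegral_lt_top)
  refine setLIntegral_mono' measurableSet_Ioi fun t (ht : 0 < t) => ?_
  calc μ {x | t < |x|} * ENNReal.ofReal (t ^ ((n : ℝ) - 1))
      ≤ ENNReal.ofReal (c * Real.exp (-δ * t)) * ENNReal.ofReal (t ^ ((n : ℝ) - 1)) := by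
        gcongr
        exact htail t ht
    _ = ENNReal.ofReal (c * (t ^ ((n : ℝ) - 1) * Real.exp (-δ * t ^ (1 : ℝ)))) := by
        rw [← ENNReal.ofReal_mul' (by positivity), Real.rpow_one]
        ring_nf

lemma integrable_pow_mul_of_setIntegral_lt_abs_le_exp {ζ : ℝ → ℝ} (hζ : Measurable ζ)
    (hζnn : ∀ x, 0 ≤ ζ x) (hint : Integrable ζ) {δ c : ℝ} (hδ : 0 < δ)
    (htail : ∀ t, 0 ≤ t → ∫ x in {x : ℝ | t < |x|}, ζ x ≤ c * Real.exp (-δ * t))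
    {n : ℕ} (hn : n ≠ 0) : Integrable fun x => x ^ n * ζ x := by
  refine (integrable_noiseLaw_iff hζ hζnn).1
    (integrable_pow_of_measure_lt_abs_le_exp (c := c) hδ (fun t ht => ?_) hn)
  have hmeas : MeasurableSet {x : ℝ | t < |x|} :=
    measurableSet_lt measurable_const measurable_id.abs
  rw [noiseLaw_apply_eq_ofReal_setIntegral hint hζnn hmeas]
  exact ENNReal.ofReal_le_ofReal (htail t ht.le)

lemma continuous_of_abs_sub_le_mul_rpow {f : ℝ → ℝ} {c θ : ℝ} (hθ : 0 < θ)
    (hf : ∀ x y, |f x - f y| ≤ c * |x - y| ^ θ) : Continuous f := by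
  refine continuous_iff_continuousAt.2 fun x => ?_
  have hmodulus : Tendsto (fun y => c * |y - x| ^ θ) (𝓝 x) (𝓝 0) := by
    have hcont : Continuous fun y => c * |y - x| ^ θ :=
      continuous_const.mul (Continuous.rpow_const (by fun_prop) fun _ => Or.inr hθ.le)
    simpa [Real.zero_rpow hθ.ne'] using hcont.tendsto x
  exact tendsto_iff_dist_tendsto_zero.2
    (squeeze_zero (fun _ => dist_nonneg) (fun y => hf y x) hmodulus)

end Tail

section InvariantMeasure

open scoped Topology

theorem exists_invariant_noiseKernel_hY {μ φ : Measure ℝ} [IsProbabilityMeasure μ]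
    [IsFiniteMeasure φ] (hμ : Integrable (fun z => z) μ) (hmean : ∫ z, z ∂μ = 0)
    (hsq : Integrable (fun z => z ^ 2) μ) {z₀ r : ℝ} (hz₀ : z₀ < 0)
    (hsupp : ∀ U ∈ 𝓝 z₀, μ U ≠ 0) (hr : 0 < r) (hφ : φ ≠ 0)
    (hsmall : ∀ y ∈ Icc (hYFixedPoint z₀ - r) (hYFixedPoint z₀ + r), φ ≤ noiseKernel μ hY y) :
    ∃ ν : Measure ℝ, ν ≠ 0 ∧ SigmaFinite ν ∧ Kernel.Invariant (noiseKernel μ hY) ν ∧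
      (∀ x, ν (Iic x) < ⊤) ∧
      ∀ ν' : Measure ℝ, SigmaFinite ν' → Kernel.Invariant (noiseKernel μ hY) ν' →
        ∃ c : ℝ≥0∞, c ≠ ⊤ ∧ ν' = c • ν := by
  have := isMarkovKernel_noiseKernel (μ := μ) continuous_hY.measurable
  obtain ⟨Q, hQ⟩ := exists_isSplitting measurableSet_Icc hsmall
  obtain ⟨U, hU, hhit⟩ := exists_measure_pow_le_hY_pow (μ := μ) hz₀ hr
  have hpow (n : ℕ) : μ U ^ n ≠ 0 := pow_ne_zero n (hsupp U hU)
  have hacc (y : ℝ) : ∃ n, (noiseKernel μ hY ^ n) y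
      (Icc (hYFixedPoint z₀ - r) (hYFixedPoint z₀ + r)) ≠ 0 :=
    (hhit y).imp fun n hn => ne_bot_of_le_ne_bot (hpow n) (hn y le_rfl)
  obtain ⟨K, hdrift⟩ := hasStrictDrift_noiseKernel hμ hmean hsq (hsupp _ (Iio_mem_nhds hz₀))
    continuous_hY.measurable (fun y => (lt_hY y).le) tendsto_hY_sub_self_mul_sq
  obtain ⟨n, hn⟩ := hhit K
  have hrec := hQ.tendsto_pow_apply_univ_zero hφ hdrift measurable_logLyapunov.ennreal_ofReal
    (fun _ => ENNReal.ofReal_ne_top) (hpow n) hn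
  obtain ⟨ν, hσ, hν, hνC, huniq⟩ := hQ.exists_invariant_forall_eq_smul hφ hrec hacc
  refine ⟨ν, ?_, hσ, hν, fun x => ?_, fun ν' hσ' hν' => ⟨_, huniq ν' hσ' hν'⟩⟩
  · rintro rfl
    exact zero_ne_one hνC
  · obtain ⟨m, hm⟩ := hhit x
    exact measure_lt_top_of_invariant hν measurableSet_Icc (hνC.trans_lt ENNReal.one_lt_top)
      (hpow m) hm

theorem stmt5_general {ζ : ℝ → ℝ} (hζ : LowerSemicontinuous ζ) (hζnn : ∀ x, 0 ≤ ζ x)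
    (hζprob : ∫ x, ζ x = 1) (hmean : ∫ x, x * ζ x = 0) (hsq : Integrable fun x => x ^ 2 * ζ x) :
    ∃ ν : Measure ℝ, ν ≠ 0 ∧ SigmaFinite ν ∧ IsInvariantY ζ ν ∧
      (∀ x : ℝ, ν (Iic x) < ⊤) ∧ ν univ = ⊤ ∧
      ∀ ν' : Measure ℝ, ν' ≠ 0 → SigmaFinite ν' → IsInvariantY ζ ν' →
        ∃ c : ℝ≥0∞, 0 < c ∧ c < ⊤ ∧ ν' = c • ν := by
  have := isProbabilityMeasure_noiseLaw hζnn hζprob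
  have hfirst := integrable_mul_of_integrable_sq_mul (integrable_of_integral_eq_one hζprob) hsq
  have hμ := (integrable_noiseLaw_iff hζ.measurable hζnn).2 hfirst
  have hμmean := (integral_noiseLaw hζ.measurable hζnn fun x => x).trans hmean
  have hμsq := (integrable_noiseLaw_iff hζ.measurable hζnn).2 hsq
  obtain ⟨z₀, hz₀, hpos⟩ := exists_neg_density_pos hζnn (hζprob ▸ one_ne_zero) hfirst hmean
  have hfix := eq_sub_of_add_eq (add_hY_hYFixedPoint hz₀)
  obtain ⟨r, hr, φ, hφfin, hφ, hsmall⟩ :=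
    exists_isFiniteMeasure_le_noiseKernel hζ continuous_hY (hfix ▸ hpos)
  obtain ⟨ν, hν0, hσ, hν, hIic, huniq⟩ := exists_invariant_noiseKernel_hY hμ hμmean hμsq hz₀
    (fun _ => noiseLaw_ne_zero_of_mem_nhds hζ hpos) hr hφ hsmall
  simp only [isInvariantY_iff_invariant_noiseKernel hζ.measurable]
  refine ⟨ν, hν0, hσ, hν, hIic, measure_univ_eq_top_of_invariant_noiseKernel hμ hμmean
    continuous_hY.measurable lt_hY hν hν0, fun ν' hν'0 hσ' hν' => ?_⟩
  obtain ⟨c, hc, rfl⟩ := huniq ν' hσ' hν'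
  exact ⟨c, pos_iff_ne_zero.2 fun h => hν'0 (by rw [h, zero_smul]), hc.lt_top, rfl⟩

end InvariantMeasure

/-- Proposition: the chain Y has a unique (up to constant) σ-finite invariant measure;
it is finite on left half-lines but has infinite total mass. -/
theorem stmt5
    (ζ : ℝ → ℝ) (hζmeas : Measurable ζ) (hζnn : ∀ x, 0 ≤ ζ x)
    (hζprob : ∫ x, ζ x = 1)
    (hmean : ∫ x, x * ζ x = 0)
    (δ : ℝ) (hδ : 0 < δ) (Cδ : ℝ)
    (htail : ∀ x : ℝ, 0 ≤ x → ∫ y in {y : ℝ | x < |y|}, ζ y ≤ Cδ * Real.exp (-δ * x))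
    (θ : ℝ) (hθ0 : 0 < θ) (hθ1 : θ ≤ 1) (Cθ : ℝ)
    (hHolder : ∀ x y : ℝ, |ζ x - ζ y| ≤ Cθ * |x - y| ^ θ)
 :
    ∃ ν : Measure ℝ, ν ≠ 0 ∧ SigmaFinite ν ∧ IsInvariantY ζ ν ∧
      (∀ x : ℝ, ν (Set.Iic x) < ⊤) ∧ ν Set.univ = ⊤ ∧
      ∀ ν' : Measure ℝ, ν' ≠ 0 → SigmaFinite ν' → IsInvariantY ζ ν' →
        ∃ c : ℝ≥0∞, 0 < c ∧ c < ⊤ ∧ ν' = c • ν := by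
  exact stmt5_general (continuous_of_abs_sub_le_mul_rpow hθ0 hHolder).lowerSemicontinuous hζnn
    hζprob hmean (integrable_pow_mul_of_setIntegral_lt_abs_le_exp hζmeas hζnn
      (integrable_of_integral_eq_one hζprob) hδ htail two_ne_zero)
end
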